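/- arXiv:2201.03880 — 3 statements merged into one kernel-verified Lean document; each statement's English description precedes it below -/
import Mathlib

section
/- For every positive integer k, if G is a graph of treewidth less than k that has a path of order n, then G has an induced path of order at least (1/4)·(log₂ n)^(1/k). -/
open SimpleGraph Real

/-- `G` has a (not necessarily induced) path on `n` vertices. -/
def HasPathOfOrder {V : Type*} (G : SimpleGraph V) (n : ℕ) : Prop :=
  ∃ (u v : V) (p : G.Walk u v), p.IsPath ∧ p.length + 1 = n

/-- `G` has a Hamiltonian path. -/
def HasHamPath {V : Type*} (G : SimpleGraph V) : Prop :=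
  ∃ (u v : V) (p : G.Walk u v), p.IsPath ∧ ∀ w, w ∈ p.support

/-- `G` has an induced path on at least `r` vertices (an induced subgraph isomorphic to a
path graph on `m ≥ r` vertices). -/
def HasInducedPathGE {V : Type*} (G : SimpleGraph V) (r : ℝ) : Prop :=
  ∃ m : ℕ, r ≤ (m : ℝ) ∧ Nonempty (pathGraph m ↪g G)

/-- A tree (or path) representation of `G` over the graph `T`: every vertex `v` of `G` has a
nonempty connected model `model v ⊆ V(T)`, and models of adjacent vertices intersect. -/
structure TreeRep {V N : Type*} (G : SimpleGraph V) (T : SimpleGraph N) where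
  model : V → Set N
  model_connected : ∀ v, (T.induce (model v)).Connected
  adj_meet : ∀ ⦃u v⦄, G.Adj u v → (model u ∩ model v).Nonempty

namespace TreeRep

variable {V N : Type*} {G : SimpleGraph V} {T : SimpleGraph N}

/-- The bag of the representation at a node `t`. -/
def bag (R : TreeRep G T) (t : N) : Set V := {v | t ∈ R.model v}

/-- The representation has width less than `k`, i.e. all bags have at most `k` vertices. -/
def WidthLT (R : TreeRep G T) (k : ℕ) : Prop := ∀ t, (R.bag t).ncard ≤ k

/-- The representation has width at most `k`, i.e. all bags have at most `k + 1` vertices. -/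
def WidthLE (R : TreeRep G T) (k : ℕ) : Prop := ∀ t, (R.bag t).ncard ≤ k + 1

/-- The weight of a path `p` of `T`: the number of vertices of `G` whose model meets `p`. -/
noncomputable def pathWeight (R : TreeRep G T) {x y : N} (p : T.Walk x y) : ℕ :=
  {v : V | ∃ t ∈ p.support, t ∈ R.model v}.ncard

/-- A representation is varied if no bag is contained in the bag at a neighboring node. -/
def Varied (R : TreeRep G T) : Prop := ∀ ⦃t t'⦄, T.Adj t t' → ¬ R.bag t ⊆ R.bag t'

/-- The representation has adhesion less than `a`: the adhesion set of every edge of `T`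
has fewer than `a` vertices. -/
def AdhesionLT (R : TreeRep G T) (a : ℕ) : Prop :=
  ∀ ⦃t t'⦄, T.Adj t t' → (R.bag t ∩ R.bag t').ncard < a

/-- The torso of the representation at a node `t`: the subgraph induced on the bag at `t`
together with all edges inside adhesion sets of edges of `T` incident to `t`. -/
def torso (R : TreeRep G T) (t : N) : SimpleGraph (R.bag t) :=
  SimpleGraph.fromRel (fun u v =>
    G.Adj u v ∨ ∃ t', T.Adj t t' ∧ (u : V) ∈ R.bag t' ∧ (v : V) ∈ R.bag t')

end TreeRep

/-- `G` has pathwidth less than `k`: it has a representation over a path all of whose bags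
have at most `k` vertices. -/
def PathwidthLT {V : Type*} (G : SimpleGraph V) (k : ℕ) : Prop :=
  ∃ (m : ℕ) (R : TreeRep G (pathGraph (m + 1))), R.WidthLT k

/-- `G` has treewidth less than `k`: it has a representation over a tree all of whose bags
have at most `k` vertices. -/
def TreewidthLT {V : Type*} (G : SimpleGraph V) (k : ℕ) : Prop :=
  ∃ (N : Type) (_ : Fintype N) (T : SimpleGraph N), T.IsTree ∧
    ∃ R : TreeRep G T, R.WidthLT k

/-- `G` has treewidth at most `k`. -/
def TreewidthLE {V : Type*} (G : SimpleGraph V) (k : ℕ) : Prop :=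
  ∃ (N : Type) (_ : Fintype N) (T : SimpleGraph N), T.IsTree ∧
    ∃ R : TreeRep G T, R.WidthLE k

/-- A leaf of a graph: a vertex with at most one neighbor. -/
def IsLeafNode {N : Type*} (T : SimpleGraph N) (l : N) : Prop :=
  (T.neighborSet l).Subsingleton

/-- `H` is obtained from `G` by a sequence of edge contractions: there is a surjection
from `V(G)` onto `V(H)` with connected fibers inducing the adjacency of `H`. -/
def IsContraction {W V : Type*} (H : SimpleGraph W) (G : SimpleGraph V) : Prop :=
  ∃ f : V → W, Function.Surjective f ∧
    (∀ w : W, (G.induce (f ⁻¹' {w})).Connected) ∧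
    (∀ x y : W, H.Adj x y ↔ x ≠ y ∧ ∃ u v : V, f u = x ∧ f v = y ∧ G.Adj u v)

/-- `G` is an interval graph: the intersection graph of a family of real intervals. -/
def IsIntervalGraph {V : Type*} (G : SimpleGraph V) : Prop :=
  ∃ l r : V → ℝ, (∀ v, l v ≤ r v) ∧
    ∀ u v : V, G.Adj u v ↔ u ≠ v ∧ max (l u) (l v) ≤ min (r u) (r v)

/-- The internal vertices of a walk: vertices of the walk distinct from its two endpoints. -/
def WalkInternal {V : Type*} {G : SimpleGraph V} {x y : V} (p : G.Walk x y) : Set V :=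
  {w | w ∈ p.support ∧ w ≠ x ∧ w ≠ y}

/-- `H` is a topological minor of `G`: there are branch vertices `φ u` for `u ∈ V(H)` and
internally disjoint paths of `G` joining them, one for each edge of `H`. -/
def IsTopMinor {W V : Type*} (H : SimpleGraph W) (G : SimpleGraph V) : Prop :=
  ∃ (φ : W ↪ V) (P : ∀ ⦃u v : W⦄, H.Adj u v → G.Walk (φ u) (φ v)),
    (∀ ⦃u v⦄ (h : H.Adj u v), (P h).IsPath) ∧
    (∀ ⦃u v⦄ (h : H.Adj u v), P h.symm = (P h).reverse) ∧
    (∀ ⦃u v⦄ (h : H.Adj u v), ∀ w ∈ WalkInternal (P h), w ∉ Set.range φ) ∧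
    (∀ ⦃u v u' v'⦄ (h : H.Adj u v) (h' : H.Adj u' v'), s(u, v) ≠ s(u', v') →
      ∀ w ∈ WalkInternal (P h), w ∉ WalkInternal (P h'))

/-- `H` is (an isomorphic copy of) a subgraph of `G`. -/
def ContainsSubgraphCopy {A B : Type*} (H : SimpleGraph A) (G : SimpleGraph B) : Prop :=
  ∃ f : A ↪ B, ∀ u v : A, H.Adj u v → G.Adj (f u) (f v)

/-- `G` is `k`-degenerate: every (induced) subgraph has a vertex of degree at most `k`. -/
def Degenerate {V : Type*} (G : SimpleGraph V) (k : ℕ) : Prop :=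
  ∀ s : Set V, s.Nonempty → ∃ v ∈ s, {w | w ∈ s ∧ G.Adj v w}.ncard ≤ k

/-- The cycle on `ZMod m` (for `m ≥ 3` this is the cycle graph on `m` vertices). -/
def ringGraph (m : ℕ) : SimpleGraph (ZMod m) :=
  SimpleGraph.fromRel (fun i j => j = i + 1)

/-- Cliquewidth expressions with labels in `Fin k`. -/
inductive CWExpr (k : ℕ) where
  | vertex (l : Fin k) : CWExpr k
  | union (e₁ e₂ : CWExpr k) : CWExpr k
  | addEdges (i j : Fin k) (hij : i ≠ j) (e : CWExpr k) : CWExpr k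
  | relabel (f : Fin k → Fin k) (e : CWExpr k) : CWExpr k

namespace CWExpr

variable {k : ℕ}

/-- The vertex set of the graph described by a cliquewidth expression. -/
def verts : CWExpr k → Type
  | vertex _ => Unit
  | union e₁ e₂ => e₁.verts ⊕ e₂.verts
  | addEdges _ _ _ e => e.verts
  | relabel _ e => e.verts

/-- The labelling of the vertices described by a cliquewidth expression. -/
def label : (e : CWExpr k) → e.verts → Fin k
  | vertex l, _ => l
  | union e₁ _, Sum.inl x => e₁.label x
  | union _ e₂, Sum.inr x => e₂.label x
  | addEdges _ _ _ e, x => e.label x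
  | relabel f e, x => f (e.label x)

/-- The adjacency relation described by a cliquewidth expression. -/
def adj : (e : CWExpr k) → e.verts → e.verts → Prop
  | vertex _, _, _ => False
  | union e₁ _, Sum.inl x, Sum.inl y => e₁.adj x y
  | union _ e₂, Sum.inr x, Sum.inr y => e₂.adj x y
  | union _ _, _, _ => False
  | addEdges i j _ e, x, y =>
      e.adj x y ∨ (e.label x = i ∧ e.label y = j) ∨ (e.label x = j ∧ e.label y = i)
  | relabel _ e, x, y => e.adj x y

/-- The graph described by a cliquewidth expression. -/
def graph (e : CWExpr k) : SimpleGraph e.verts := SimpleGraph.fromRel e.adj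

end CWExpr

/-- `G` has cliquewidth at most `k`: it is isomorphic to the graph of a cliquewidth
expression with at most `k` labels. -/
def CliquewidthLE {V : Type*} (G : SimpleGraph V) (k : ℕ) : Prop :=
  ∃ e : CWExpr k, Nonempty (G ≃g e.graph)

/-- `G` has `(k, Δ)`-almost bounded degree: removing at most `k` vertices yields a graph of
maximum degree at most `Δ`. -/
def AlmostBoundedDegree {V : Type*} (G : SimpleGraph V) (k Δ : ℕ) : Prop :=
  ∃ X : Set V, X.ncard ≤ k ∧ ∀ v ∉ X, {w | w ∉ X ∧ G.Adj v w}.ncard ≤ Δ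

/-- An embedding scheme for `H`: a rotation system (a permutation of the darts that is,
around each vertex, a single cycle on the darts leaving that vertex) together with a
signature on the edges. -/
structure EmbScheme {W : Type*} (H : SimpleGraph W) where
  rot : Equiv.Perm H.Dart
  rot_fst : ∀ d : H.Dart, (rot d).fst = d.fst
  rot_cyclic : ∀ d d' : H.Dart, d.fst = d'.fst → ∃ n : ℕ, (rot ^ n) d = d'
  sign : Sym2 W → Bool

namespace EmbScheme

variable {W : Type*} {H : SimpleGraph W}

/-- The face-tracing step of an embedding scheme, acting on darts with a direction. -/
def faceStep (S : EmbScheme H) : H.Dart × Bool → H.Dart × Bool :=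
  fun p =>
    let s' := xor p.2 (S.sign p.1.edge)
    ((if s' then S.rot.symm p.1.symm else S.rot p.1.symm), s')

/-- The number of orbits of a function. -/
noncomputable def orbitCount {α : Type*} (f : α → α) : ℕ :=
  Nat.card (Quotient (Relation.EqvGen.setoid (fun x y => f x = y)))

/-- The scheme describes an embedding of `H` in a surface of Euler genus at most `g`.
Isolated vertices each bound one face; every other face is traced twice by `faceStep`,
so the number of faces is `orbitCount (faceStep) / 2` plus the number of isolated
vertices, and the Euler genus of the embedding is `2c - |V| + |E| - F`. -/
def GenusLE (S : EmbScheme H) (g : ℕ) : Prop :=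
  2 * Nat.card H.ConnectedComponent + Nat.card H.edgeSet ≤
    g + Nat.card W +
      (orbitCount S.faceStep / 2 + Nat.card {v : W | ∀ w, ¬ H.Adj v w})

/-- The cycle `e 0, e 1, …, e (m-1)` is a facial cycle of the embedding scheme `S`:
its consecutive darts are consecutive in a face traversal. -/
def IsFacialCycle (S : EmbScheme H) {m : ℕ} (e : ZMod m → W)
    (hadj : ∀ x : ZMod m, H.Adj (e x) (e (x + 1))) : Prop :=
  ∃ b : ZMod m → Bool, ∀ x : ZMod m,
    S.faceStep (⟨(e x, e (x + 1)), hadj x⟩, b x) =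
      (⟨(e (x + 1), e (x + 1 + 1)), hadj (x + 1)⟩, b (x + 1))

end EmbScheme

/-- `Hs` has a `C`-vortex of width less than `k`, where `C` is the cycle of `G₀` given by
`e`: the vertices common to `Hs` and `G₀` are exactly those of `C`, and `Hs` has a cycle
representation over `C` in which the model of each vertex of `C` contains that vertex and
every bag has at most `k` vertices. -/
def IsVortex {V : Type*} {G : SimpleGraph V} (Hs G₀ : G.Subgraph) {m : ℕ}
    (e : ZMod m → G₀.verts) (k : ℕ) : Prop :=
  Hs.verts ∩ G₀.verts = Subtype.val '' Set.range e ∧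
  ∃ model : Hs.verts → Set (ZMod m),
    (∀ v, ((ringGraph m).induce (model v)).Connected) ∧
    (∀ (x : ZMod m) (v : Hs.verts), (e x : V) = (v : V) → x ∈ model v) ∧
    (∀ ⦃u v⦄, Hs.coe.Adj u v → (model u ∩ model v).Nonempty) ∧
    (∀ t : ZMod m, {v : Hs.verts | t ∈ model v}.ncard ≤ k)

/-- `G` is `(g, p, a, k)`-almost-embeddable. -/
def AlmostEmbeddable {V : Type*} (G : SimpleGraph V) (g p a k : ℕ) : Prop :=
  ∃ A : Set V, A.ncard ≤ a ∧
  ∃ s : ℕ, s ≤ p ∧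
  ∃ (G₀ : G.Subgraph) (Gv : Fin s → G.Subgraph),
    (G₀ ⊔ ⨆ i, Gv i) = (⊤ : G.Subgraph).deleteVerts A ∧
    (∀ i j, i ≠ j → Disjoint (Gv i).verts (Gv j).verts) ∧
    ∃ S : EmbScheme G₀.coe, S.GenusLE g ∧
    ∃ (m : Fin s → ℕ) (e : ∀ i, ZMod (m i) → G₀.verts)
      (hadj : ∀ i x, G₀.coe.Adj (e i x) (e i (x + 1))),
      (∀ i, 3 ≤ m i) ∧
      (∀ i, Function.Injective (e i)) ∧
      (∀ i, S.IsFacialCycle (e i) (hadj i)) ∧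
      (∀ i j, i ≠ j → Disjoint (Set.range (e i)) (Set.range (e j))) ∧
      (∀ i, IsVortex (Gv i) G₀ (e i) k)

namespace IndPath

open Classical in
/-- Splitting a list at the elements of `D`. -/
theorem split_list {α : Type*} (D p : α → Prop) (m : ℕ) : ∀ (n : ℕ) (L : List α), L.length ≤ n →
    (∀ L' : List α, L' <:+: L → (∀ x ∈ L', ¬ D x) → L'.countP (fun x => decide (p x)) ≤ m) →
    L.countP (fun x => decide (p x)) + 1 ≤ (L.countP (fun x => decide (D x)) + 1) * (m + 1) := by
  intro n
  induction n with
  | zero =>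
    intro L hL h
    have : L = [] := List.length_eq_zero_iff.1 (by omega)
    subst this
    simp
  | succ n ih =>
    intro L hL h
    by_cases hD : ∃ x ∈ L, D x
    · obtain ⟨x, hx, hDx⟩ := hD
      obtain ⟨A, B, rfl⟩ := List.append_of_mem hx
      simp only [List.length_append, List.length_cons] at hL
      have hA := ih A (by omega) (fun L' hL' => h L' (hL'.trans ⟨[], x :: B, by simp⟩))
      have hB := ih B (by omega) (fun L' hL' => h L' (hL'.trans ⟨A ++ [x], [], by simp⟩))
      simp only [List.countP_append, List.countP_cons, hDx, decide_true, if_true]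
      have : (if decide (p x) = true then 1 else 0) ≤ 1 := by split <;> omega
      nlinarith
    · push Not at hD
      have := h L (List.infix_refl L) hD
      nlinarith [Nat.zero_le (L.countP (fun x => decide (D x)) * (m+1))]

open Classical in
theorem split_exists {α : Type*} (D p : α → Prop) (L : List α) :
    ∃ L' : List α, L' <:+: L ∧ (∀ x ∈ L', ¬ D x) ∧
    L.countP (fun x => decide (p x)) + 1 ≤
      (L.countP (fun x => decide (D x)) + 1) * (L'.countP (fun x => decide (p x)) + 1) := by
  by_contra hcon
  push Not at hcon
  set a := L.countP (fun x => decide (p x)) with ha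
  -- choose the best infix
  have : ∃ M, (∃ L' : List α, L' <:+: L ∧ (∀ x ∈ L', ¬ D x) ∧ L'.countP (fun x => decide (p x)) = M) ∧
      ∀ L' : List α, L' <:+: L → (∀ x ∈ L', ¬ D x) → L'.countP (fun x => decide (p x)) ≤ M := by
    let S : ℕ → Prop := fun M => ∃ L' : List α, L' <:+: L ∧ (∀ x ∈ L', ¬ D x) ∧
      L'.countP (fun x => decide (p x)) = M
    have hS0 : S 0 := ⟨[], List.nil_infix, by simp, by simp⟩
    refine ⟨Nat.findGreatest S a, Nat.findGreatest_spec (P := S) (Nat.zero_le a) hS0, ?_⟩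
    intro L' h1 h2
    exact Nat.le_findGreatest (h1.sublist.countP_le) ⟨L', h1, h2, rfl⟩
  obtain ⟨M, ⟨L', h1, h2, h3⟩, hM⟩ := this
  have h4 := split_list D p M _ L le_rfl hM
  have h5 := hcon L' h1 h2
  rw [h3] at h5
  exact absurd h4 (not_le.2 h5)

/-- Union of the models of the elements of a list. -/
def U {V N : Type*} {G : SimpleGraph V} {T : SimpleGraph N} (R : TreeRep G T) (L : List V) : Set N :=
  {t | ∃ v ∈ L, t ∈ R.model v}

theorem U_connected {V N : Type*} {G : SimpleGraph V} {T : SimpleGraph N} (R : TreeRep G T) :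
    ∀ (L : List V), L ≠ [] → L.IsChain G.Adj → (T.induce (U R L)).Connected
  | [], h, _ => absurd rfl h
  | [v], _, _ => by
    have : U R [v] = R.model v := by ext; simp [U]
    rw [this]; exact R.model_connected v
  | v :: w :: L, _, hc => by
    have hc' := List.isChain_cons_cons.1 hc
    have ih := U_connected R (w :: L) (by simp) hc'.2
    have : U R (v :: w :: L) = R.model v ∪ U R (w :: L) := by
      ext; simp [U]
    rw [this]
    have hne : (R.model v ∩ U R (w :: L)).Nonempty := ?_
    · exact induce_union_connected (R.model_connected v).preconnected ih.preconnected hne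
    obtain ⟨t, h1, h2⟩ := R.adj_meet hc'.1
    exact ⟨t, h1, w, by simp, h2⟩

theorem exists_path_in {N : Type*} {T : SimpleGraph N} {C : Set N} (hC : (T.induce C).Connected)
    {a b : N} (ha : a ∈ C) (hb : b ∈ C) : ∃ p : T.Walk a b, p.IsPath ∧ ∀ x ∈ p.support, x ∈ C := by
  classical
  obtain ⟨w⟩ := hC.preconnected ⟨a, ha⟩ ⟨b, hb⟩
  let q : T.Walk a b := w.map (SimpleGraph.Embedding.induce C).toHom
  refine ⟨q.bypass, q.bypass_isPath, fun x hx => ?_⟩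
  have := q.support_bypass_subset_support hx
  rw [show q.support = _ from Walk.support_map _ _, List.mem_map] at this
  obtain ⟨y, _, rfl⟩ := this
  exact y.2

theorem gate {N : Type*} {T : SimpleGraph N} (hT : T.IsTree) (C₀ : Set N)
    (h₀ : (T.induce C₀).Connected) (r : N) :
    ∃ t ∈ C₀, ∀ C : Set N, (T.induce C).Connected → r ∈ C → (∃ u ∈ C, u ∈ C₀) → t ∈ C := by
  classical
  have hne : C₀.Nonempty := by
    obtain ⟨x⟩ := h₀.nonempty
    exact ⟨x.1, x.2⟩
  obtain ⟨t, ht, hmin⟩ : ∃ t ∈ C₀, ∀ u ∈ C₀, T.dist r t ≤ T.dist r u := by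
    obtain ⟨t, ht, h⟩ := exists_minimalFor_of_wellFoundedLT (fun x => x ∈ C₀) (fun u => T.dist r u) hne
    refine ⟨t, ht, fun u hu => ?_⟩
    by_contra hc
    have := h hu (by dsimp; omega)
    dsimp at this
    omega
  refine ⟨t, ht, fun C hC hr ⟨u, huC, hu⟩ => ?_⟩
  obtain ⟨p, hp, hpC⟩ := exists_path_in hC hr huC
  obtain ⟨q, hq, hqC⟩ := exists_path_in h₀ ht hu
  obtain ⟨w, hw, hlen⟩ := (hT.connected.preconnected r t).exists_path_of_dist
  have hwq : (w.append q).IsPath := by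
    rw [Walk.isPath_def, Walk.support_append, List.nodup_append]
    refine ⟨hw.support_nodup, hq.support_nodup.tail, ?_⟩
    rintro x hx y hy rfl
    have hxC := hqC x (List.mem_of_mem_tail hy)
    have h1 := hmin x hxC
    have h2 := T.dist_le (w.takeUntil x hx)
    have hxt : x = t := by
      by_contra hne
      have := w.length_takeUntil_lt hx hne
      omega
    subst hxt
    have := hq.support_nodup
    rw [Walk.support_eq_cons] at this
    exact (List.nodup_cons.1 this).1 hy
  have := hT.isAcyclic.path_unique ⟨p, hp⟩ ⟨_, hwq⟩
  have h : p = w.append q := congrArg Subtype.val this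
  apply hpC
  rw [h]
  simp

/-- A list of nodes in convex position along a path of the tree. -/
def Conv {N : Type*} (T : SimpleGraph N) (P : List N) : Prop :=
  ∀ a b c, [a, b, c].Sublist P → ∀ C : Set N, (T.induce C).Connected → a ∈ C → c ∈ C → b ∈ C

open Classical in
theorem heavy {V N : Type*} {G : SimpleGraph V} {T : SimpleGraph N} (hT : T.IsTree)
    (R : TreeRep G T) : ∀ (n : ℕ) (H : List V), H.length ≤ n → H.IsChain G.Adj → ∀ r : N,
    ∃ P : List N, Conv T (r :: P) ∧ (∀ x ∈ P, x ∈ U R H) ∧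
      H.length + 1 ≤ 2 ^ (H.countP (fun v => decide (∃ t ∈ P, t ∈ R.model v))) := by
  intro n
  induction n with
  | zero =>
    intro H hH hc r
    have : H = [] := List.length_eq_zero_iff.1 (by omega)
    subst this
    refine ⟨[], ?_, by simp, by simp⟩
    intro a b c h
    have := h.length_le
    simp at this
  | succ n ih =>
    intro H hH hc r
    by_cases hne : H = []
    · subst hne
      exact ih [] (by simp) hc r
    obtain ⟨t, ht, hgate⟩ := gate hT (U R H) (U_connected R H hne hc) r
    obtain ⟨H', hinf, hav, hcount⟩ := split_exists (fun v => t ∈ R.model v) (fun _ => True) H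
    have hlt : H'.length < H.length := by
      refine lt_of_le_of_ne hinf.length_le fun h => ?_
      have := hinf.sublist.eq_of_length h
      subst this
      obtain ⟨v, hv, htv⟩ := ht
      exact hav v hv htv
    obtain ⟨P, hP, hPU, hw⟩ := ih H' (by omega) (hc.infix hinf) t
    have hPU' : ∀ x ∈ P, x ∈ U R H := fun x hx => by
      obtain ⟨v, hv, hxv⟩ := hPU x hx
      exact ⟨v, hinf.subset hv, hxv⟩
    refine ⟨t :: P, ?_, ?_, ?_⟩
    · intro a b c habc C hC haC hcC
      by_cases h1 : [a, b, c].Sublist (t :: P)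
      · exact hP a b c h1 C hC haC hcC
      have h2 : a = r ∧ [b, c].Sublist (t :: P) := by
        rcases List.sublist_cons_iff.1 habc with h | ⟨l, h, h'⟩
        · exact absurd h h1
        · simp only [List.cons.injEq] at h
          exact ⟨h.1, h.2 ▸ h'⟩
      obtain ⟨rfl, h2⟩ := h2
      have hcP : c ∈ P := by
        have := h2.tail
        simpa using this
      have htC := hgate C hC haC ⟨c, hcC, hPU' c hcP⟩
      rcases List.sublist_cons_iff.1 h2 with h | ⟨l, h, h'⟩
      · exact hP t b c (List.Sublist.cons_cons t h) C hC htC hcC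
      · simp only [List.cons.injEq] at h
        rw [h.1]; exact htC
    · intro x hx
      rcases List.mem_cons.1 hx with rfl | hx
      · exact ht
      · exact hPU' x hx
    · simp only [decide_true, List.countP_true] at hcount
      set j := H.countP (fun v => decide (t ∈ R.model v)) with hj
      set w := H'.countP (fun v => decide (∃ t ∈ P, t ∈ R.model v)) with hwdef
      have hsum : j + w ≤ H.countP (fun v => decide (∃ s ∈ t :: P, s ∈ R.model v)) := by
        obtain ⟨A, B, rfl⟩ := hinf
        have h0 : H'.countP (fun v => decide (t ∈ R.model v)) = 0 := by
          rw [List.countP_eq_zero]; simpa using hav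
        have e1 : ∀ L : List V, L.countP (fun v => decide (t ∈ R.model v)) ≤
            L.countP (fun v => decide (∃ s ∈ t :: P, s ∈ R.model v)) := fun L => by
          apply List.countP_mono_left
          intro x _ hx
          simp only [decide_eq_true_eq] at hx ⊢
          exact ⟨t, by simp, hx⟩
        have e2 : w ≤ H'.countP (fun v => decide (∃ s ∈ t :: P, s ∈ R.model v)) := by
          apply List.countP_mono_left
          intro x _ hx
          simp only [decide_eq_true_eq] at hx ⊢
          obtain ⟨s, hs, hs'⟩ := hx
          exact ⟨s, List.mem_cons_of_mem _ hs, hs'⟩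
        have := e1 A
        have := e1 B
        simp only [List.countP_append] at hj ⊢
        omega
      calc H.length + 1 ≤ (j + 1) * (H'.length + 1) := hcount
        _ ≤ 2 ^ j * 2 ^ w := Nat.mul_le_mul (Nat.lt_two_pow_self) hw
        _ = 2 ^ (j + w) := (pow_add _ _ _).symm
        _ ≤ _ := Nat.pow_le_pow_right (by norm_num) hsum

/-- A connected piece contains an induced path between any two vertices. -/
theorem exists_induced {V : Type*} {G : SimpleGraph V} (H : List V) (hc : H.IsChain G.Adj)
    {a b : V} (ha : a ∈ H) (hb : b ∈ H) :
    ∃ Q : List V, Q.IsChain G.Adj ∧ a ∈ Q ∧ b ∈ Q ∧ (∀ x ∈ Q, x ∈ H) ∧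
      Nonempty (pathGraph Q.length ↪g G) := by
  classical
  have hconn : (G.induce {v | v ∈ H}).Preconnected := by
    have : ∀ L : List V, L.IsChain G.Adj → (G.induce {v | v ∈ L}).Preconnected := by
      intro L
      induction L with
      | nil => rintro - ⟨x, hx⟩; simp at hx
      | cons v L ih =>
        intro hc
        cases L with
        | nil =>
          rintro ⟨x, hx⟩ ⟨y, hy⟩
          simp only [Set.mem_setOf_eq, List.mem_singleton] at hx hy
          subst hx; subst hy; exact Reachable.refl _
        | cons w L =>
          have hc' := List.isChain_cons_cons.1 hc
          have h1 := ih hc'.2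
          have e : {x | x ∈ v :: w :: L} = {v, w} ∪ {x | x ∈ w :: L} := by
            ext x; simp only [List.mem_cons, Set.mem_setOf_eq, Set.mem_union, Set.mem_insert_iff, Set.mem_singleton_iff]; tauto
          rw [e]
          exact (induce_union_connected (induce_pair_connected_of_adj hc'.1).preconnected h1 ⟨w, by simp, by simp⟩).preconnected
    exact this H hc
  let K := G.induce {v | v ∈ H}
  let a' : {v | v ∈ H} := ⟨a, ha⟩
  let b' : {v | v ∈ H} := ⟨b, hb⟩
  obtain ⟨w, hw, hlen⟩ := (hconn a' b').exists_path_of_dist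
  have hd : ∀ i j, i ≤ j → j ≤ w.length → j - i ≤ K.dist (w.getVert i) (w.getVert j) := by
    intro i j hij hj
    have h1 : K.dist a' (w.getVert i) ≤ i := by
      have := K.dist_le (w.take i)
      rw [Walk.take_length] at this
      omega
    have h2 : K.dist (w.getVert j) b' ≤ w.length - j := by
      have := K.dist_le (w.drop j)
      rw [Walk.drop_length] at this
      omega
    have h3 := (show K.Connected from haveI : Nonempty {v | v ∈ H} := ⟨a'⟩; ⟨hconn⟩)
    have h4 := h3.dist_triangle (u := a') (v := w.getVert i) (w := b')
    have h5 := h3.dist_triangle (u := w.getVert i) (v := w.getVert j) (w := b')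
    have h6 : w.length = K.dist a' b' := hlen
    omega
  let q : G.Walk a b := w.map (SimpleGraph.Embedding.induce _).toHom
  refine ⟨q.support, q.isChain_adj_support, q.start_mem_support, q.end_mem_support, ?_, ?_⟩
  · intro x hx
    rw [show q.support = _ from Walk.support_map _ _, List.mem_map] at hx
    obtain ⟨y, _, rfl⟩ := hx
    exact y.2
  · have hql : q.support.length = w.length + 1 := by
      rw [show q.support = _ from Walk.support_map _ _]; simp
    rw [hql]
    have hinj : ∀ i j : ℕ, i ≤ j → j ≤ w.length → w.getVert i = w.getVert j → i = j := by
      intro i j hij hj he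
      have := hd i j hij hj
      rw [he, SimpleGraph.dist_self] at this
      omega
    have hadj : ∀ i j : ℕ, i ≤ j → j ≤ w.length → K.Adj (w.getVert i) (w.getVert j) → i + 1 = j := by
      intro i j hij hj he
      have h := hd i j hij hj
      rw [dist_eq_one_iff_adj.2 he] at h
      rcases eq_or_lt_of_le hij with rfl | h'
      · exact absurd he K.irrefl
      · omega
    refine ⟨⟨⟨fun i => (w.getVert i : V), ?_⟩, ?_⟩⟩
    · intro i j h
      have h' : w.getVert i = w.getVert j := Subtype.ext h
      rcases le_total (i : ℕ) j with hij | hij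
      · exact Fin.ext (hinj i j hij (by omega) h')
      · exact Fin.ext (hinj j i hij (by omega) h'.symm).symm
    · intro i j
      rw [pathGraph_adj]
      constructor
      · intro h
        have h' : K.Adj (w.getVert i) (w.getVert j) := h
        rcases le_total (i : ℕ) j with hij | hij
        · exact Or.inl (hadj i j hij (by omega) h')
        · exact Or.inr (hadj j i hij (by omega) h'.symm)
      · rintro (h | h)
        · have := w.adj_getVert_succ (i := i) (by omega)
          rw [h] at this
          exact this
        · have := w.adj_getVert_succ (i := j) (by omega)
          rw [h] at this
          exact this.symm

open Classical in
theorem bound {V N : Type*} {G : SimpleGraph V} {T : SimpleGraph N}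
    (R : TreeRep G T) (P : List N) (hP : Conv T P) (q : ℕ)
    (hq : ∀ m, Nonempty (pathGraph m ↪g G) → m ≤ q) :
    ∀ (k : ℕ) (H : List V), H.Nodup → H.IsChain G.Adj →
      (∀ b ∈ P, H.countP (fun v => decide (b ∈ R.model v)) ≤ k) →
      H.countP (fun v => decide (∃ t ∈ P, t ∈ R.model v)) + 1 ≤ (q + 1) ^ k := by
  intro k
  induction k with
  | zero =>
    intro H _ _ hb
    have : H.countP (fun v => decide (∃ t ∈ P, t ∈ R.model v)) = 0 := by
      rw [List.countP_eq_zero]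
      rintro v hv h
      simp only [decide_eq_true_eq] at h
      obtain ⟨t, ht, htv⟩ := h
      have := List.countP_eq_zero.1 (Nat.le_zero.1 (hb t ht)) v hv
      simp [htv] at this
    simp [this]
  | succ k ih =>
    intro H hnd hc hb
    let F := P.filter (fun t => decide (∃ v ∈ H, t ∈ R.model v))
    by_cases hF : F = []
    · have : H.countP (fun v => decide (∃ t ∈ P, t ∈ R.model v)) = 0 := by
        rw [List.countP_eq_zero]
        rintro v hv h
        simp only [decide_eq_true_eq] at h
        obtain ⟨t, ht, htv⟩ := h
        have := List.filter_eq_nil_iff.1 hF t ht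
        simp only [decide_eq_true_eq] at this
        exact this ⟨v, hv, htv⟩
      rw [this]
      exact Nat.one_le_pow _ _ (by omega)
    have hmemF : ∀ t ∈ F, ∃ v ∈ H, t ∈ R.model v := fun t ht => by
      simpa using (List.mem_filter.1 ht).2
    obtain ⟨va, hva, hma⟩ := hmemF _ (List.head_mem hF)
    obtain ⟨vc, hvc, hmc⟩ := hmemF _ (List.getLast_mem hF)
    obtain ⟨Q, hQc, hQa, hQb, hQH, hQe⟩ := exists_induced H hc hva hvc
    have hQl := hq _ hQe
    have hUQ := U_connected R Q (List.ne_nil_of_mem hQa) hQc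
    have hcov : ∀ b ∈ F, b ∈ U R Q := by
      intro b hbF
      have ha' : F.head hF ∈ U R Q := ⟨va, hQa, hma⟩
      have hc' : F.getLast hF ∈ U R Q := ⟨vc, hQb, hmc⟩
      by_cases h1 : b = F.head hF
      · rw [h1]; exact ha'
      by_cases h2 : b = F.getLast hF
      · rw [h2]; exact hc'
      refine hP (F.head hF) b (F.getLast hF) (List.Sublist.trans (l₂ := F) ?_ List.filter_sublist) _ hUQ ha' hc'
      obtain ⟨x, F', hFx⟩ := List.exists_cons_of_ne_nil hF
      have hhead : F.head hF = x := by simp [hFx]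
      have hbF' : b ∈ F' := by
        rw [hFx] at hbF
        rcases List.mem_cons.1 hbF with h | h
        · exact absurd (h.trans hhead.symm) h1
        · exact h
      have hF'ne := List.ne_nil_of_mem hbF'
      have hlast : F.getLast hF = F'.getLast hF'ne := by
        simp only [hFx]; exact List.getLast_cons hF'ne
      rw [hhead, hlast, hFx]
      refine List.Sublist.cons_cons x ?_
      rw [hlast] at h2
      rw [← List.dropLast_append_getLast hF'ne] at hbF'
      have hbd : b ∈ F'.dropLast := by
        rcases List.mem_append.1 hbF' with h | h
        · exact h
        · exact absurd (List.mem_singleton.1 h) h2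
      conv_rhs => rw [← List.dropLast_append_getLast hF'ne]
      exact List.Sublist.append (List.singleton_sublist.2 hbd) (List.Sublist.refl [F'.getLast hF'ne])
    obtain ⟨H', hinf, hav, hcount⟩ := split_exists (fun v => v ∈ Q) (fun v => ∃ t ∈ P, t ∈ R.model v) H
    have hQcount : H.countP (fun v => decide (v ∈ Q)) ≤ q := by
      rw [List.countP_eq_length_filter]
      refine le_trans ?_ hQl
      refine ((hnd.filter _).subperm ?_).length_le
      intro x hx
      simpa using (List.mem_filter.1 hx).2
    have hrec := ih H' (hnd.sublist hinf.sublist) (hc.infix hinf) (by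
      intro b hbP
      by_cases hbF : b ∈ F
      · obtain ⟨v, hvQ, hbv⟩ := hcov b hbF
        have hvH := hQH v hvQ
        have h1 := hb b hbP
        obtain ⟨A, B, rfl⟩ := hinf
        have hvH' : v ∉ H' := fun h => hav v h hvQ
        have hpos : 0 < A.countP (fun v => decide (b ∈ R.model v)) + B.countP (fun v => decide (b ∈ R.model v)) := by
          simp only [List.mem_append] at hvH
          rcases hvH with (h | h) | h
          · have : 0 < A.countP (fun v => decide (b ∈ R.model v)) :=
              List.countP_pos_iff.2 ⟨v, h, by simpa using hbv⟩
            omega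
          · exact absurd h hvH'
          · have : 0 < B.countP (fun v => decide (b ∈ R.model v)) :=
              List.countP_pos_iff.2 ⟨v, h, by simpa using hbv⟩
            omega
        simp only [List.countP_append] at h1
        omega
      · have : H'.countP (fun v => decide (b ∈ R.model v)) = 0 := by
          rw [List.countP_eq_zero]
          intro v hv h
          simp only [decide_eq_true_eq] at h
          exact hbF (List.mem_filter.2 ⟨hbP, by simpa using ⟨v, hinf.subset hv, h⟩⟩)
        omega)
    have hcount' : H.countP (fun v => decide (∃ t ∈ P, t ∈ R.model v)) + 1 ≤
        (H.countP (fun v => decide (v ∈ Q)) + 1) *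
          (H'.countP (fun v => decide (∃ t ∈ P, t ∈ R.model v)) + 1) := by
      convert hcount
    calc _ ≤ _ := hcount'
      _ ≤ (q + 1) * (q + 1) ^ k := Nat.mul_le_mul (by omega) hrec
      _ = (q + 1) ^ (k + 1) := by ring

end IndPath

theorem stmt2 {V : Type} [Fintype V] (k : ℕ) (hk : 0 < k) (G : SimpleGraph V) (n : ℕ)
    (htw : TreewidthLT G k) (hpath : HasPathOfOrder G n) :
    HasInducedPathGE G ((1 / 4 : ℝ) * Real.logb 2 n ^ ((1 : ℝ) / k)) := by
  classical
  obtain ⟨N, _, T, hT, R, hR⟩ := htw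
  obtain ⟨u, v, p, hp, hn⟩ := hpath
  have hcard : ∀ m, Nonempty (pathGraph m ↪g G) → m ≤ Fintype.card V := by
    rintro m ⟨f⟩
    simpa using Fintype.card_le_of_injective f f.injective
  have h1 : Nonempty (pathGraph 1 ↪g G) := by
    refine ⟨⟨⟨fun _ => u, fun i j _ => Subsingleton.elim i j⟩, ?_⟩⟩
    intro i j
    have : i = j := Subsingleton.elim i j
    subst this
    simp
  let S : ℕ → Prop := fun m => Nonempty (pathGraph m ↪g G)
  let q := Nat.findGreatest S (Fintype.card V)
  have hqS : S q := Nat.findGreatest_spec (P := S) (hcard 1 h1) h1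
  have hq : ∀ m, Nonempty (pathGraph m ↪g G) → m ≤ q := fun m hm =>
    Nat.le_findGreatest (hcard m hm) hm
  have hq1 : 1 ≤ q := hq 1 h1
  obtain ⟨r⟩ := hT.connected.nonempty
  obtain ⟨P, hP, -, hw⟩ := IndPath.heavy hT R _ p.support le_rfl p.isChain_adj_support r
  have hPc : IndPath.Conv T P := fun a b c h => hP a b c (h.trans (List.sublist_cons_self r P))
  have hb := IndPath.bound R P hPc q hq k p.support hp.support_nodup p.isChain_adj_support (by
    intro b _
    refine le_trans ?_ (hR b)
    rw [List.countP_eq_length_filter, ← List.toFinset_card_of_nodup (hp.support_nodup.filter _),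
      ← Set.ncard_coe_finset]
    apply Set.ncard_le_ncard _ (Set.toFinite _)
    intro x hx
    simpa [TreeRep.bag] using (by simpa using hx : x ∈ p.support ∧ b ∈ R.model x).2)
  rw [Walk.length_support, hn] at hw
  set w := p.support.countP (fun v => decide (∃ t ∈ P, t ∈ R.model v))
  refine ⟨q, ?_, hqS⟩
  have hn1 : 1 ≤ n := by omega
  have hlog : Real.logb 2 n ≤ w := by
    rw [Real.logb_le_iff_le_rpow (by norm_num) (by exact_mod_cast hn1), Real.rpow_natCast]
    exact_mod_cast (by omega : n ≤ 2 ^ w)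
  have hlog0 : 0 ≤ Real.logb 2 n := Real.logb_nonneg (by norm_num) (by exact_mod_cast hn1)
  have hle : Real.logb 2 n ≤ ((q : ℝ) + 1) ^ k := by
    refine hlog.trans ?_
    exact_mod_cast (by omega : w ≤ (q + 1) ^ k)
  have hroot : Real.logb 2 n ^ ((1 : ℝ) / k) ≤ (q : ℝ) + 1 := by
    calc _ ≤ (((q : ℝ) + 1) ^ k) ^ ((1 : ℝ) / k) := Real.rpow_le_rpow hlog0 hle (by positivity)
      _ = (q : ℝ) + 1 := by
        rw [one_div]; exact Real.pow_rpow_inv_natCast (by positivity) hk.ne'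
  have : (1 : ℝ) ≤ q := by exact_mod_cast hq1
  linarith
end

section
/- For every non-trivial graph class 𝒢 that is closed under taking topological minors there is a constant d ∈ (0,1) such that the following holds: if a graph G ∈ 𝒢 has a path of order n, then G has an induced path of order at least (log₂ n)^d. -/
open SimpleGraph Real

/-- An induced path with `k+1` vertices inside `[a,b)`, starting at `a`. -/
def IndPathIn (H : SimpleGraph ℕ) (k a b : ℕ) : Prop :=
  ∃ q : ℕ → ℕ, q 0 = a ∧ (∀ i ≤ k, a ≤ q i ∧ q i < b) ∧
    ∀ i j, i < j → j ≤ k → q i < q j ∧ (H.Adj (q i) (q j) ↔ j = i + 1)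

/-- Gyarfas-type lemma: either there is an induced path with `k+1` vertices, or a vertex whose
neighbours are dense in a long interval. -/
theorem gyarfas (H : SimpleGraph ℕ) (m M E : ℕ) (hM : 1 ≤ M) (hE1 : 1 ≤ E)
    (hadj : ∀ i, i + 1 < m → H.Adj i (i + 1)) :
    ∀ k a b, b ≤ m → a + M * E ^ k ≤ b →
      (∃ w c, a ≤ w ∧ c ≤ b ∧ w + M ≤ c ∧ ∀ x y, w < x → x < y → y ≤ c → c ≤ w + E * (y - x) →
        ∃ z, x ≤ z ∧ z < y ∧ H.Adj w z) ∨ IndPathIn H k a b := by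
  intro k
  induction k with
  | zero =>
    intro a b hb hab
    right
    refine ⟨fun _ => a, rfl, fun i _ => ⟨le_rfl, by simp at hab ⊢; omega⟩, ?_⟩
    intro i j hij hj
    omega
  | succ k ih =>
    intro a b hb hab
    by_cases hd : ∀ x y, a < x → x < y → y ≤ b → b ≤ a + E * (y - x) →
        ∃ z, x ≤ z ∧ z < y ∧ H.Adj a z
    · left
      refine ⟨a, b, le_rfl, le_rfl, ?_, hd⟩
      have : M * 1 ≤ M * E ^ (k + 1) := Nat.mul_le_mul_left _ (Nat.one_le_pow _ _ (by omega))
      omega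
    · push Not at hd
      obtain ⟨x, y, hax, hxy, hyb, hlen, hno⟩ := hd
      have ha1 : H.Adj a (a + 1) := hadj a (by omega)
      have hx1 : a + 1 < x := by
        rcases Nat.lt_or_ge (a + 1) x with h | h
        · exact h
        · exact absurd ha1 (hno (a + 1) h (by omega))
      classical
      let S := (Finset.Ioo a x).filter (fun z => H.Adj a z)
      have hS : S.Nonempty := ⟨a + 1, by simp [S, ha1]; omega⟩
      obtain ⟨hx1', hx2'⟩ : (a < S.max' hS ∧ S.max' hS < x) ∧ H.Adj a (S.max' hS) := by
        have := S.max'_mem hS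
        simpa [S] using this
      set x' := S.max' hS with hx'
      have hmax : ∀ z, x' < z → z < y → ¬ H.Adj a z := by
        intro z hz hzy hA
        rcases Nat.lt_or_ge z x with h | h
        · have : z ∈ S := by simp [S, hA, h]; omega
          have := S.le_max' z this
          omega
        · exact hno z h hzy hA
      have hlen2 : x' + M * E ^ k ≤ y := by
        have h1 : E * (M * E ^ k) ≤ E * (y - x) := by
          have : E * (M * E ^ k) = M * E ^ (k + 1) := by ring
          omega
        rcases Nat.eq_zero_or_pos E with h0 | h0
        · subst h0
          simp at hlen
          omega
        · have := Nat.le_of_mul_le_mul_left h1 h0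
          omega
      rcases ih x' y (by omega) hlen2 with ⟨w, c, h1, h2, h3, h4⟩ | ⟨q, hq0, hq1, hq2⟩
      · left
        exact ⟨w, c, by omega, by omega, h3, h4⟩
      · right
        refine ⟨fun i => if i = 0 then a else q (i - 1), by simp, ?_, ?_⟩
        · intro i hi
          by_cases h : i = 0
          · simp [h]; omega
          · simp only [h, if_false]
            have := hq1 (i - 1) (by omega)
            omega
        · intro i j hij hj
          have hj0 : j ≠ 0 := by omega
          by_cases h : i = 0
          · subst h
            simp only [hj0, if_true, if_false]
            have hb := hq1 (j - 1) (by omega)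
            refine ⟨by omega, ?_⟩
            constructor
            · intro hA
              by_contra hne
              have := (hq2 0 (j - 1) (by omega) (by omega)).1
              exact hmax _ (by omega) hb.2 hA
            · intro h1
              have : j - 1 = 0 := by omega
              rw [this, hq0]
              exact hx2'
          · simp only [h, hj0, if_false]
            have := hq2 (i - 1) (j - 1) (by omega) (by omega)
            refine ⟨this.1, this.2.trans (by omega)⟩

/-- `s` vertices, all dense at scale `g` in an interval of length at least `g * D`. -/
def St (H : SimpleGraph ℕ) (m s D : ℕ) : Prop :=
  ∃ (w : ℕ → ℕ) (a b g : ℕ), 1 ≤ g ∧ b ≤ m ∧ a + g * D ≤ b ∧ (∀ i < s, w i < a) ∧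
    (∀ i j, i < j → j < s → w i < w j) ∧
    ∀ i < s, ∀ x, a ≤ x → x + g ≤ b → ∃ z, x ≤ z ∧ z < x + g ∧ H.Adj (w i) z

theorem St_step (H : SimpleGraph ℕ) (m k s D : ℕ) (hD : 1 ≤ D)
    (hadj : ∀ i, i + 1 < m → H.Adj i (i + 1))
    (hno : ∀ a, ¬ IndPathIn H k a m)
    (h : St H m s ((3 * D) ^ (k + 1))) : St H m (s + 1) D := by
  obtain ⟨w, a, b, g, hg, hb, hab, hwa, hw, hden⟩ := h
  have h1 : a + (g * (3 * D)) * (3 * D) ^ k ≤ b := by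
    have : (g * (3 * D)) * (3 * D) ^ k = g * (3 * D) ^ (k + 1) := by ring
    omega
  rcases gyarfas H m (g * (3 * D)) (3 * D) (by nlinarith) (by omega) hadj k a b hb h1 with
    ⟨v, c, hav, hcb, hvc, hv⟩ | ⟨q, hq0, hq1, hq2⟩
  · set L := c - v with hL
    set g' := L / (3 * D) + 1 with hg'
    have hgL : g ≤ L / (3 * D) := by
      rw [Nat.le_div_iff_mul_le (by omega)]
      omega
    have hL1 : L / (3 * D) * (3 * D) ≤ L := Nat.div_mul_le_self _ _
    have hL2 : L < (3 * D) * g' := by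
      rw [hg']
      exact Nat.lt_mul_div_succ L (by omega)
    refine ⟨fun i => if i < s then w i else v, v + 1, c, g', by omega, by omega, ?_, ?_, ?_, ?_⟩
    · have : g' * D + 1 ≤ L / (3 * D) * (3 * D) := by
        rw [hg']
        have : 1 ≤ L / (3 * D) := by omega
        nlinarith
      omega
    · intro i hi
      by_cases h : i < s
      · simp only [h, if_true]
        have := hwa i h
        omega
      · simp [h]
    · intro i j hij hj
      have h : i < s := by omega
      by_cases h' : j < s
      · simp only [h, h', if_true]
        exact hw i j hij h'
      · simp only [h, h', if_true, if_false]
        have := hwa i h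
        omega
    · intro i hi x hx hxc
      by_cases h : i < s
      · simp only [h, if_true]
        obtain ⟨z, hz1, hz2, hz3⟩ := hden i h x (by omega) (by omega)
        exact ⟨z, hz1, by omega, hz3⟩
      · simp only [h, if_false]
        refine hv x (x + g') (by omega) (by omega) hxc ?_
        rw [Nat.add_sub_cancel_left]
        omega
  · exact absurd ⟨q, hq0, fun i hi => ⟨(hq1 i hi).1, lt_of_lt_of_le (hq1 i hi).2 hb⟩, hq2⟩ (hno a)

/-- tower-free bound -/
def TT (k N : ℕ) : ℕ → ℕ
  | 0 => N
  | s + 1 => (3 * TT k N s) ^ (k + 1)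

theorem TT_pos (k N : ℕ) (hN : 1 ≤ N) (s : ℕ) : 1 ≤ TT k N s := by
  induction s with
  | zero => exact hN
  | succ s ih => exact Nat.one_le_pow _ _ (by omega)

theorem TT_le (k a s : ℕ) : ∃ e, TT k (2 ^ a) s ≤ 2 ^ e ∧ e + 2 ≤ (k + 2) ^ s * (a + 2) := by
  induction s with
  | zero => exact ⟨a, le_rfl, by simp⟩
  | succ s ih =>
    obtain ⟨e, h1, h2⟩ := ih
    refine ⟨(e + 2) * (k + 1), ?_, ?_⟩
    · rw [TT, pow_mul]
      apply Nat.pow_le_pow_left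
      rw [pow_add]
      omega
    · have : (k + 2) ^ (s + 1) * (a + 2) = (k + 2) * ((k + 2) ^ s * (a + 2)) := by ring
      rw [this]
      nlinarith

theorem St_all (H : SimpleGraph ℕ) (m k N t : ℕ) (hN : 1 ≤ N)
    (hadj : ∀ i, i + 1 < m → H.Adj i (i + 1))
    (hno : ∀ a, ¬ IndPathIn H k a m) (hm : TT k N t ≤ m) :
    ∀ s ≤ t, St H m s (TT k N (t - s)) := by
  intro s
  induction s with
  | zero =>
    intro _
    exact ⟨fun _ => 0, 0, m, 1, le_rfl, le_rfl, by simpa using hm, by simp, by simp, by simp⟩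
  | succ s ih =>
    intro hs
    apply St_step H m k s _ (TT_pos k N hN _) hadj hno
    have := ih (by omega)
    have e : t - s = (t - (s + 1)) + 1 := by omega
    rw [e, TT] at this
    exact this

/-- walking along an interval -/
theorem interval_walk {V : Type*} (G : SimpleGraph V) (p : ℕ → V) (m : ℕ)
    (hadj : ∀ i, i + 1 < m → G.Adj (p i) (p (i + 1))) (x l r : ℕ) (hlx : l ≤ x) (hrm : r ≤ m) :
    ∀ d, x + d < r → ∃ W : G.Walk (p x) (p (x + d)), ∀ v ∈ W.support, ∃ z, l ≤ z ∧ z < r ∧ p z = v := by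
  intro d
  induction d with
  | zero =>
    intro h
    exact ⟨Walk.nil, by simp; exact ⟨x, hlx, h, rfl⟩⟩
  | succ d ih =>
    intro h
    obtain ⟨W, hW⟩ := ih (by omega)
    refine ⟨W.concat (hadj (x + d) (by omega)), ?_⟩
    intro v hv
    rw [Walk.support_concat] at hv
    simp at hv
    rcases hv with hv | hv
    · exact hW v hv
    · exact ⟨x + d + 1, by omega, by omega, hv.symm⟩

theorem interval_walk2 {V : Type*} (G : SimpleGraph V) (p : ℕ → V) (m : ℕ)
    (hadj : ∀ i, i + 1 < m → G.Adj (p i) (p (i + 1))) (x y l r : ℕ) (hlx : l ≤ x) (hly : l ≤ y)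
    (hxr : x < r) (hyr : y < r) (hrm : r ≤ m) :
    ∃ W : G.Walk (p x) (p y), ∀ v ∈ W.support, ∃ z, l ≤ z ∧ z < r ∧ p z = v := by
  rcases Nat.le_total x y with h | h
  · obtain ⟨d, rfl⟩ := Nat.exists_eq_add_of_le h
    exact interval_walk G p m hadj x l r hlx hrm d hyr
  · obtain ⟨d, rfl⟩ := Nat.exists_eq_add_of_le h
    obtain ⟨W, hW⟩ := interval_walk G p m hadj y l r hly hrm d hxr
    exact ⟨W.reverse, by simpa using hW⟩

theorem link {V : Type*} (G : SimpleGraph V) (p : ℕ → V) (m : ℕ)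
    (hadj : ∀ i, i + 1 < m → G.Adj (p i) (p (i + 1))) (u v : V) (x y l r : ℕ) (hlx : l ≤ x)
    (hly : l ≤ y) (hxr : x < r) (hyr : y < r) (hrm : r ≤ m) (hu : G.Adj u (p x))
    (hv : G.Adj v (p y)) :
    ∃ W : G.Walk u v, W.IsPath ∧ ∀ w ∈ WalkInternal W, ∃ z, l ≤ z ∧ z < r ∧ p z = w := by
  classical
  obtain ⟨W, hW⟩ := interval_walk2 G p m hadj x y l r hlx hly hxr hyr hrm
  let W' : G.Walk u v := Walk.cons hu (W.concat hv.symm)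
  refine ⟨W'.bypass, W'.bypass_isPath, ?_⟩
  rintro w ⟨h1, h2, h3⟩
  have h4 := W'.support_bypass_subset_support h1
  simp only [W', Walk.support_cons, Walk.support_concat] at h4
  simp [h2, h3] at h4
  exact hW w h4

theorem topMinor_of_St {V : Type*} (G : SimpleGraph V) (p : ℕ → V) (m t N : ℕ)
    (hinj : ∀ i j, i < m → j < m → p i = p j → i = j)
    (hadj : ∀ i, i + 1 < m → G.Adj (p i) (p (i + 1))) (hN : t * t ≤ N)
    (h : St (G.comap p) m t N) (F : SimpleGraph (Fin t)) : IsTopMinor F G := by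
  obtain ⟨w, a, b, g, hg, hb, hab, hwa, hw, hden⟩ := h
  have hgN : g * (t * t) ≤ g * N := Nat.mul_le_mul_left _ hN
  have hwm : ∀ i < t, w i < a := hwa
  have key : ∀ u v : Fin t, ∃ W : G.Walk (p (w u)) (p (w v)), W.IsPath ∧
      ∀ x ∈ WalkInternal W, ∃ z, a + g * (u * t + v) ≤ z ∧ z < a + g * (u * t + v) + g ∧ p z = x := by
    intro u v
    have hu := u.2
    have hv := v.2
    have hle : g * (u * t + v) + g ≤ g * (t * t) := by
      have : (u : ℕ) * t + v + 1 ≤ t * t := by nlinarith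
      nlinarith
    obtain ⟨x, hx1, hx2, hx3⟩ := hden u hu (a + g * (u * t + v)) (by omega) (by omega)
    obtain ⟨y, hy1, hy2, hy3⟩ := hden v hv (a + g * (u * t + v)) (by omega) (by omega)
    exact link G p m hadj _ _ x y _ _ hx1 hy1 hx2 hy2 (by omega) hx3 hy3
  choose W hWp hWi using key
  have hlt : ∀ u v : Fin t, a + g * (u * t + v) + g ≤ b := by
    intro u v
    have hu := u.2
    have hv := v.2
    have hle : g * (u * t + v) + g ≤ g * (t * t) := by
      have : (u : ℕ) * t + v + 1 ≤ t * t := by nlinarith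
      nlinarith
    omega
  have hrev : ∀ {x y : V} (Q : G.Walk x y), WalkInternal Q.reverse = WalkInternal Q := by
    intro x y Q
    ext z
    simp [WalkInternal]
    tauto
  have hwinj : ∀ u v : Fin t, p (w u) = p (w v) → u = v := by
    intro u v huv
    have h0 := hlt u v
    have h1 := hwa u u.2
    have h2 := hwa v v.2
    have := hinj _ _ (by omega) (by omega) huv
    rcases lt_trichotomy u v with h | h | h
    · have := hw u v h v.2
      omega
    · exact h
    · have := hw v u h u.2
      omega
  let P : ∀ ⦃u v : Fin t⦄, F.Adj u v → G.Walk (p (w u)) (p (w v)) :=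
    fun u v _ => if u < v then W u v else (W v u).reverse
  have hPi : ∀ ⦃u v⦄ (h : F.Adj u v), ∀ x ∈ WalkInternal (P h),
      ∃ z, a + g * (min u v * t + max u v : ℕ) ≤ z ∧ z < a + g * (min u v * t + max u v : ℕ) + g ∧
        z < b ∧ p z = x := by
    intro u v h x hx
    by_cases huv : u < v
    · simp only [P, huv, if_true] at hx
      obtain ⟨z, h1, h2, h3⟩ := hWi u v x hx
      have := hlt u v
      rw [min_eq_left (by omega), max_eq_right (by omega)]
      exact ⟨z, h1, h2, by omega, h3⟩
    · simp only [P, huv, if_false] at hx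
      rw [hrev] at hx
      obtain ⟨z, h1, h2, h3⟩ := hWi v u x hx
      have := hlt v u
      rw [min_eq_right (by omega), max_eq_left (by omega)]
      exact ⟨z, h1, h2, by omega, h3⟩
  refine ⟨⟨fun u => p (w u), fun u v => hwinj u v⟩, P, ?_, ?_, ?_, ?_⟩
  · intro u v h
    by_cases huv : u < v
    · simp only [P, huv, if_true]
      exact hWp u v
    · simp only [P, huv, if_false]
      exact (hWp v u).reverse
  · intro u v h
    have hne := h.ne
    by_cases huv : u < v
    · have : ¬ v < u := by omega
      simp only [P, huv, this, if_true, if_false]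
    · have : v < u := by omega
      simp only [P, huv, this, if_true, if_false, Walk.reverse_reverse]
  · rintro u v h x hx ⟨i, hi⟩
    obtain ⟨z, h1, h2, h3, h4⟩ := hPi h x hx
    have h5 := hwa i i.2
    have : z = w i := hinj _ _ (by omega) (by omega) (h4.trans hi.symm)
    omega
  · intro u v u' v' h h' hne x hx hx'
    obtain ⟨z, h1, h2, h3, h4⟩ := hPi h x hx
    obtain ⟨z', h1', h2', h3', h4'⟩ := hPi h' x hx'
    have : z = z' := hinj _ _ (by omega) (by omega) (h4.trans h4'.symm)
    subst this
    have e : (min u v * t + max u v : ℕ) = (min u' v' * t + max u' v' : ℕ) := by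
      rcases lt_trichotomy (min u v * t + max u v : ℕ) (min u' v' * t + max u' v' : ℕ) with h | h | h
      · exfalso
        have := Nat.mul_le_mul_left g h
        rw [Nat.succ_eq_add_one, mul_add] at this
        omega
      · exact h
      · exfalso
        have := Nat.mul_le_mul_left g h
        rw [Nat.succ_eq_add_one, mul_add] at this
        omega
    have hm1 : ((max u v : Fin t) : ℕ) < t := (max u v).2
    have hm2 : ((max u' v' : Fin t) : ℕ) < t := (max u' v').2
    have e1 := congrArg (· % t) e
    simp only [Nat.mul_add_mod_self_right, Nat.mod_eq_of_lt hm1, Nat.mod_eq_of_lt hm2] at e1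
    have e2 : ((min u v : Fin t) : ℕ) = ((min u' v' : Fin t) : ℕ) := by
      rw [e1] at e
      exact Nat.eq_of_mul_eq_mul_right (by omega) (Nat.add_right_cancel e)
    apply hne
    rw [Sym2.eq_iff]
    have e1' : max u v = max u' v' := Fin.ext e1
    have e2' : min u v = min u' v' := Fin.ext e2
    rcases le_total u v with ha | ha <;> rcases le_total u' v' with hb' | hb' <;>
      simp only [max_eq_left, max_eq_right, min_eq_left, min_eq_right, ha, hb'] at e1' e2' <;>
      simp [e1', e2']

/-- An induced path in index space gives an induced path graph. -/
theorem embed_of_ind {V : Type*} (G : SimpleGraph V) (p : ℕ → V) (m k a : ℕ)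
    (hinj : ∀ i j, i < m → j < m → p i = p j → i = j)
    (h : IndPathIn (G.comap p) k a m) : Nonempty (pathGraph (k + 1) ↪g G) := by
  obtain ⟨q, -, hq1, hq2⟩ := h
  refine ⟨⟨⟨fun i => p (q i), ?_⟩, ?_⟩⟩
  · intro i j hij
    have hi := hq1 i (by omega)
    have hj := hq1 j (by omega)
    have := hinj _ _ hi.2 hj.2 hij
    rcases lt_trichotomy i j with h | h | h
    · have := (hq2 i j h (by omega)).1
      omega
    · exact h
    · have := (hq2 j i h (by omega)).1
      omega
  · intro i j
    rw [pathGraph_adj]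
    change G.Adj (p (q i)) (p (q j)) ↔ _
    rcases lt_trichotomy i j with h | h | h
    · have := (hq2 i j h (by omega)).2
      rw [SimpleGraph.comap_adj] at this
      rw [this]
      omega
    · subst h
      simp
    · have := (hq2 j i h (by omega)).2
      rw [SimpleGraph.comap_adj] at this
      rw [G.adj_comm, this]
      omega

theorem stmt3 (𝒢 : ∀ ⦃n : ℕ⦄, SimpleGraph (Fin n) → Prop)
    (hclosed : ∀ {n m : ℕ} (G : SimpleGraph (Fin n)) (H : SimpleGraph (Fin m)),
      𝒢 G → IsTopMinor H G → 𝒢 H)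
    (hnontrivial : ∃ (n : ℕ) (G : SimpleGraph (Fin n)), ¬ 𝒢 G) :
    ∃ d : ℝ, 0 < d ∧ d < 1 ∧
      ∀ {n : ℕ} (G : SimpleGraph (Fin n)) (m : ℕ), 𝒢 G → HasPathOfOrder G m →
        HasInducedPathGE G (Real.logb 2 m ^ d) := by
  obtain ⟨t, F, hF⟩ := hnontrivial
  set C : ℕ := 2 * t + (t * t + 2) with hC
  have hC2 : (2 : ℝ) ≤ C := by
    have : 2 ≤ C := by omega
    exact_mod_cast this
  refine ⟨1 / C, by positivity, ?_, ?_⟩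
  · rw [div_lt_one (by linarith)]
    linarith
  intro n G m hG hpath
  obtain ⟨u, v, p, hp, hlen⟩ := hpath
  have hadj : ∀ i, i + 1 < m → G.Adj (p.getVert i) (p.getVert (i + 1)) := by
    intro i hi
    exact p.adj_getVert_succ (by omega)
  have hinj : ∀ i j, i < m → j < m → p.getVert i = p.getVert j → i = j := by
    intro i j hi hj h
    exact hp.getVert_injOn (by simp; omega) (by simp; omega) h
  by_cases hm1 : m = 1
  · refine ⟨0, ?_, ⟨⟨⟨fun i => i.elim0, fun i => i.elim0⟩, fun {i} => i.elim0⟩⟩⟩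
    subst hm1
    simp
  classical
  have hex : ∃ K, ¬ Nonempty (pathGraph (K + 1) ↪g G) := by
    refine ⟨n, ?_⟩
    rintro ⟨f⟩
    have := Fintype.card_le_of_injective f f.injective
    simp at this
  set K := Nat.find hex with hK
  have hKno : ¬ Nonempty (pathGraph (K + 1) ↪g G) := Nat.find_spec hex
  have hKmin : ∀ j < K, Nonempty (pathGraph (j + 1) ↪g G) := by
    intro j hj
    have := Nat.find_min hex hj
    tauto
  have hK2 : 2 ≤ K := by
    by_contra hlt
    apply hKno
    have hA := hadj 0 (by omega)
    have hK01 : K = 0 ∨ K = 1 := by omega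
    refine embed_of_ind G p.getVert m K 0 hinj ⟨id, rfl, fun i hi => ⟨Nat.zero_le _, by simp; omega⟩, ?_⟩
    intro i j hij hj
    have hi0 : i = 0 := by omega
    have hj1 : j = 1 := by omega
    subst hi0 hj1
    simp
    simpa using hA
  refine ⟨K, ?_, ?_⟩
  swap
  · have := hKmin (K - 1) (by omega)
    rwa [Nat.sub_add_cancel (by omega)] at this
  have hmT : m < TT K (2 ^ (t * t)) t := by
    by_contra hle
    push Not at hle
    have hSt := St_all (G.comap p.getVert) m K (2 ^ (t * t)) t Nat.one_le_two_pow
      (fun i hi => hadj i hi) (fun a ha => hKno (embed_of_ind G p.getVert m K a hinj ha)) hle t le_rfl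
    rw [Nat.sub_self, TT] at hSt
    exact hF (hclosed G F hG (topMinor_of_St G p.getVert m t _ hinj hadj Nat.lt_two_pow_self.le hSt F))
  obtain ⟨e, he1, he2⟩ := TT_le K (t * t) t
  have heC : e ≤ K ^ C := by
    have h1 : (K + 2) ^ t ≤ K ^ (2 * t) := by
      rw [pow_mul]
      exact Nat.pow_le_pow_left (by nlinarith) _
    have h2 : t * t + 2 ≤ K ^ (t * t + 2) :=
      (Nat.lt_two_pow_self).le.trans (Nat.pow_le_pow_left hK2 _)
    have h3 := Nat.mul_le_mul h1 h2
    rw [← pow_add, ← hC] at h3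
    omega
  have hlog : Real.logb 2 m ≤ (K : ℝ) ^ C := by
    have hmpos : (0 : ℝ) < m := by
      have : 0 < m := by omega
      exact_mod_cast this
    have h1 : (m : ℝ) ≤ 2 ^ (e : ℝ) := by
      rw [Real.rpow_natCast]
      exact_mod_cast (hmT.le.trans he1)
    have h2 : Real.logb 2 m ≤ e := by
      rw [Real.logb_le_iff_le_rpow (by norm_num) hmpos]
      exact h1
    exact h2.trans (by exact_mod_cast heC)
  have hlog0 : 0 ≤ Real.logb 2 m := by
    apply Real.logb_nonneg (by norm_num)
    have : 1 ≤ m := by omega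
    exact_mod_cast this
  calc Real.logb 2 m ^ (1 / (C : ℝ)) ≤ ((K : ℝ) ^ C) ^ (1 / (C : ℝ)) :=
        Real.rpow_le_rpow hlog0 hlog (by positivity)
    _ = K := by
        rw [one_div]
        exact Real.pow_rpow_inv_natCast (by positivity) (by omega)
end

section
/- For all positive integers k and ℓ there is a constant d ∈ (0,1) such that the following holds: if a graph G is k-degenerate, has no induced cycle on at least ℓ vertices, and has a path of order n, then G has an induced path of order at least (log₂ n)^d. -/
open SimpleGraph Real

section Helpers

/-- `G` with all edges not inside `U` deleted. -/
def restr {V : Type} (G : SimpleGraph V) (U : Set V) : SimpleGraph V where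
  Adj u v := G.Adj u v ∧ u ∈ U ∧ v ∈ U
  symm := ⟨fun _ _ h => ⟨h.1.symm, h.2.2, h.2.1⟩⟩
  loopless := ⟨fun u h => G.loopless.irrefl u h.1⟩

lemma restr_mono {V : Type} {G : SimpleGraph V} {U U' : Set V} (h : U ⊆ U') :
    restr G U ≤ restr G U' := fun _ _ hh => ⟨hh.1, h hh.2.1, h hh.2.2⟩

lemma restr_reach_mem {V : Type} {G : SimpleGraph V} {U : Set V} {a b : V}
    (h : (restr G U).Reachable a b) (ha : a ∈ U) : b ∈ U := by
  obtain ⟨p⟩ := h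
  induction p with
  | nil => exact ha
  | cons hh _ ih => exact ih hh.2.2

lemma walk_restr {V : Type} {G : SimpleGraph V} {U : Set V} {a b : V} (p : G.Walk a b)
    (h : ∀ v ∈ p.support, v ∈ U) : (restr G U).Reachable a b := by
  induction p with
  | nil => exact Reachable.refl _
  | @cons u v w hh q ih =>
    have h1 : (restr G U).Adj u v := ⟨hh, h _ (by simp), h _ (by simp)⟩
    exact h1.reachable.trans (ih fun v hv => h _ (by simp [hv]))

lemma restr_walk {V : Type} {G : SimpleGraph V} {U : Set V} {a b : V}
    (p : (restr G U).Walk a b) (ha : a ∈ U) :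
    ∃ q : G.Walk a b, q.length = p.length ∧ ∀ v ∈ q.support, v ∈ U := by
  induction p with
  | nil => exact ⟨.nil, rfl, by simpa using ha⟩
  | @cons u v w hh q ih =>
    obtain ⟨q', h1, h2⟩ := ih hh.2.2
    refine ⟨.cons hh.1 q', by simp [h1], ?_⟩
    intro x hx
    simp only [Walk.support_cons, List.mem_cons] at hx
    rcases hx with rfl | hx
    · exact ha
    · exact h2 _ hx

lemma dist_adj_le {V : Type} {H : SimpleGraph V} {a u v : V} (hr : H.Reachable a u)
    (h : H.Adj u v) : H.dist a v ≤ H.dist a u + 1 := by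
  obtain ⟨p, hp⟩ := hr.exists_walk_length_eq_dist
  have := dist_le (p.concat h)
  simpa [hp] using this

lemma geod {V : Type} {H : SimpleGraph V} {a b : V} (hr : H.Reachable a b) :
    ∃ f : ℕ → V, f 0 = a ∧ f (H.dist a b) = b ∧
      (∀ i < H.dist a b, H.Adj (f i) (f (i + 1))) ∧
      (∀ i ≤ H.dist a b, H.dist a (f i) = i ∧ H.dist (f i) b = H.dist a b - i ∧
        H.Reachable a (f i)) := by
  obtain ⟨p, hp⟩ := hr.exists_walk_length_eq_dist
  refine ⟨p.getVert, by simp, by rw [← hp]; simp, ?_, ?_⟩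
  · intro i hi
    exact p.adj_getVert_succ (by omega)
  · intro i hi
    have h1 := dist_le (p.take i)
    have h2 := dist_le (p.drop i)
    have h3 : H.Reachable a (p.getVert i) := ⟨p.take i⟩
    obtain ⟨q1, hq1⟩ := h3.exists_walk_length_eq_dist
    have h4 : H.Reachable (p.getVert i) b := ⟨p.drop i⟩
    obtain ⟨q2, hq2⟩ := h4.exists_walk_length_eq_dist
    have h5 := dist_le (q1.append q2)
    simp only [Walk.length_append] at h5
    have h6 : (p.take i).length ≤ i := by simp [Walk.take_length]
    have h7 : (p.drop i).length = p.length - i := by simp [Walk.drop_length]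
    refine ⟨by omega, by omega, h3⟩

lemma dist_lt_of_noPath {V : Type} {G : SimpleGraph V} {U : Set V} {L : ℕ}
    (HL : ∀ m, Nonempty (pathGraph m ↪g G) → m ≤ L) {a b : V} (ha : a ∈ U)
    (hr : (restr G U).Reachable a b) : (restr G U).dist a b + 1 ≤ L := by
  apply HL
  obtain ⟨f, h0, hd, hadj, hdist⟩ := geod hr
  have hinj : ∀ i j, i ≤ (restr G U).dist a b → j ≤ (restr G U).dist a b → f i = f j → i = j := by
    intro i j hi hj h
    rw [← (hdist i hi).1, ← (hdist j hj).1, h]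
  refine ⟨⟨⟨fun i => f i, ?_⟩, ?_⟩⟩
  · intro i j h
    exact Fin.ext (hinj _ _ (by omega) (by omega) h)
  · intro i j
    have key : ∀ i j, i ≤ (restr G U).dist a b → j ≤ (restr G U).dist a b →
        G.Adj (f i) (f j) → j ≤ i + 1 := by
      intro i j hi hj h
      have h1 := restr_reach_mem (hdist i hi).2.2 ha
      have h2 := restr_reach_mem (hdist j hj).2.2 ha
      have := dist_adj_le (hdist i hi).2.2 (show (restr G U).Adj (f i) (f j) from ⟨h, h1, h2⟩)
      rw [(hdist i hi).1, (hdist j hj).1] at this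
      exact this
    rw [pathGraph_adj]
    change G.Adj (f i) (f j) ↔ _
    constructor
    · intro h
      have h1 := key i j (by omega) (by omega) h
      have h2 := key j i (by omega) (by omega) h.symm
      have : (i : ℕ) ≠ j := by
        intro hh; rw [hh] at h; exact G.loopless.irrefl _ h
      omega
    · rintro (h | h)
      · rw [← h]; exact (hadj i (by omega)).1
      · rw [← h]; exact (hadj j (by omega)).1.symm

/-- Finding an induced cycle from a height function. -/
lemma ring_of_height {V : Type} {G : SimpleGraph V} (W : Set V) (x0 : V) (h : V → ℕ) (N : ℕ)
    (hN : 4 ≤ N) (hx0 : x0 ∉ W)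
    (hadj : ∀ u ∈ W, ∀ v ∈ W, G.Adj u v → h v ≤ h u + 1)
    (hx : ∀ u ∈ W, G.Adj x0 u → h u = 1 ∨ h u = N - 1)
    (hex : ∃ a ∈ W, ∃ b ∈ W, G.Adj x0 a ∧ G.Adj x0 b ∧ h a = 1 ∧ h b = N - 1 ∧
      (restr G W).Reachable a b) :
    ∃ m, N ≤ m ∧ Nonempty (ringGraph m ↪g G) := by
  classical
  have hex' : ∃ d, ∃ a ∈ W, ∃ b ∈ W, G.Adj x0 a ∧ G.Adj x0 b ∧ h a = 1 ∧ h b = N - 1 ∧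
      (restr G W).Reachable a b ∧ (restr G W).dist a b = d := by
    obtain ⟨a, ha, b, hb, h1, h2, h3, h4, h5⟩ := hex
    exact ⟨_, a, ha, b, hb, h1, h2, h3, h4, h5, rfl⟩
  obtain ⟨a, ha, b, hb, hxa, hxb, h1, h2, hr, hd⟩ := Nat.find_spec hex'
  have hmin := fun m (hm : m < Nat.find hex') => Nat.find_min hex' hm
  set d := Nat.find hex'
  obtain ⟨f, f0, fd, fadj, fdist⟩ := geod hr
  rw [hd] at fd fadj fdist
  have fW : ∀ i ≤ d, f i ∈ W := fun i hi => restr_reach_mem (fdist i hi).2.2 ha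
  have hh : ∀ i ≤ d, h (f i) ≤ 1 + i := by
    intro i
    induction i with
    | zero => intro _; rw [f0, h1]
    | succ i ih =>
      intro hi
      have := hadj _ (fW i (by omega)) _ (fW (i+1) hi) (fadj i (by omega)).1
      have := ih (by omega)
      omega
  have hdN : N ≤ d + 2 := by
    have := hh d le_rfl
    rw [fd, h2] at this
    omega
  have hmid : ∀ i ≤ d, G.Adj x0 (f i) → i = 0 ∨ i = d := by
    intro i hi hA
    by_contra hc
    push Not at hc
    rcases hx _ (fW i hi) hA with h' | h'
    · refine hmin (d - i) (by omega) ⟨f i, fW i hi, b, hb, hA, hxb, h', h2, ?_, (fdist i hi).2.1⟩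
      exact (fdist i hi).2.2.symm.trans hr
    · exact hmin i (by omega) ⟨a, ha, f i, fW i hi, hxa, hA, h1, h', (fdist i hi).2.2,
        (fdist i hi).1⟩
  have hinj : ∀ i j, i ≤ d → j ≤ d → f i = f j → i = j := by
    intro i j hi hj h
    rw [← (fdist i hi).1, ← (fdist j hj).1, h]
  have key : ∀ i j, i ≤ d → j ≤ d → G.Adj (f i) (f j) → j ≤ i + 1 := by
    intro i j hi hj h
    have := dist_adj_le (fdist i hi).2.2
      (show (restr G W).Adj (f i) (f j) from ⟨h, fW i hi, fW j hj⟩)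
    rw [(fdist i hi).1, (fdist j hj).1] at this
    exact this
  have hfx : ∀ i ≤ d, f i ≠ x0 := fun i hi hc => hx0 (hc ▸ fW i hi)
  refine ⟨d + 2, hdN, ⟨⟨⟨fun (z : Fin (d + 2)) => if (z : ℕ) = d + 1 then x0 else f z, ?_⟩, ?_⟩⟩⟩
  · intro (i : Fin (d+2)) (j : Fin (d+2)) hij
    apply Fin.ext
    have hi := i.2
    have hj := j.2
    dsimp only at hij
    split_ifs at hij with h3 h4 h4
    · omega
    · exact absurd hij.symm (hfx _ (by omega))
    · exact absurd hij (hfx _ (by omega))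
    · exact hinj _ _ (by omega) (by omega) hij
  · intro (i : Fin (d+2)) (j : Fin (d+2))
    have hi := i.2
    have hj := j.2
    have hring : (ringGraph (d + 2)).Adj i j ↔
        ((j : ℕ) = i + 1 ∨ (i : ℕ) = j + 1 ∨ ((i : ℕ) = 0 ∧ (j : ℕ) = d + 1) ∨
          ((j : ℕ) = 0 ∧ (i : ℕ) = d + 1)) := by
      have e1 : ∀ i j : Fin (d + 2), j = i + 1 ↔
          ((j : ℕ) = i + 1 ∨ ((j : ℕ) = 0 ∧ (i : ℕ) = d + 1)) := by
        intro i j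
        rw [Fin.ext_iff, Fin.val_add_one]
        have := i.2
        have := j.2
        split_ifs with h
        · rw [h]; simp; omega
        · have : (i : ℕ) ≠ d + 1 := fun hc => h (Fin.ext (by simpa using hc))
          omega
      have e0 : (ringGraph (d + 2)).Adj i j ↔ i ≠ j ∧ (j = i + 1 ∨ i = j + 1) := Iff.rfl
      rw [e0, e1, e1, Ne, Fin.ext_iff]
      omega
    rw [hring]
    change G.Adj (if (i : ℕ) = d + 1 then x0 else f i) (if (j : ℕ) = d + 1 then x0 else f j) ↔ _
    split_ifs with h3 h4 h4
    · exact ⟨fun hA => absurd hA (G.loopless.irrefl _), fun hA => by omega⟩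
    · constructor
      · intro hA
        have := hmid _ (by omega) hA
        omega
      · intro hA
        rcases (show (j : ℕ) = 0 ∨ (j : ℕ) = d by omega) with h5 | h5
        · rw [h5, f0]; exact hxa
        · rw [h5, fd]; exact hxb
    · constructor
      · intro hA
        have := hmid _ (by omega) hA.symm
        omega
      · intro hA
        rcases (show (i : ℕ) = 0 ∨ (i : ℕ) = d by omega) with h5 | h5
        · rw [h5, f0]; exact hxa.symm
        · rw [h5, fd]; exact hxb.symm
    · constructor
      · intro hA
        have h5 := key _ _ (by omega) (by omega) hA
        have h6 := key _ _ (by omega) (by omega) hA.symm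
        have : (i : ℕ) ≠ j := by
          intro hh; rw [hh] at hA; exact G.loopless.irrefl _ hA
        omega
      · intro hA
        rcases (show (j : ℕ) = i + 1 ∨ (i : ℕ) = j + 1 by omega) with h5 | h5
        · rw [h5]; exact (fadj i (by omega)).1
        · rw [h5]; exact (fadj j (by omega)).1.symm

/-- `Q` is nonempty and connected. -/
def ConnSet {V : Type} (G : SimpleGraph V) (Q : Set V) : Prop :=
  Q.Nonempty ∧ ∀ a ∈ Q, ∀ b ∈ Q, (restr G Q).Reachable a b

/-- A hierarchy of depth `D` and branching `R` of connected sets, with leaves satisfying `p`. -/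
def Rich {V : Type} (G : SimpleGraph V) (p : Set V → Prop) (R : ℕ) : ℕ → Set V → Prop
  | 0, Q => ConnSet G Q ∧ p Q
  | D + 1, Q => ConnSet G Q ∧ ∃ f : Fin R → Set V, (∀ i j, i ≠ j → Disjoint (f i) (f j)) ∧
      (∀ i, f i ⊆ Q) ∧ ∀ i, Rich G p R D (f i)

lemma Rich.conn {V : Type} {G : SimpleGraph V} {p : Set V → Prop} {R D : ℕ} {Q : Set V}
    (h : Rich G p R D Q) : ConnSet G Q := by
  cases D with
  | zero => exact h.1
  | succ D => exact h.1

lemma Rich.mono {V : Type} {G : SimpleGraph V} {p p' : Set V → Prop} {R D : ℕ} {Q : Set V}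
    (h : Rich G p R D Q) (hp : ∀ T ⊆ Q, p T → p' T) : Rich G p' R D Q := by
  induction D generalizing Q with
  | zero => exact ⟨h.1, hp _ le_rfl h.2⟩
  | succ D ih =>
    obtain ⟨h1, f, h2, h3, h4⟩ := h
    exact ⟨h1, f, h2, h3, fun i => ih (h4 i) fun T hT => hp T (hT.trans (h3 i))⟩

lemma Rich.split {V : Type} {G : SimpleGraph V} {p : Set V → Prop} {R a b : ℕ} {Q : Set V}
    (h : Rich G p R (b + a) Q) : Rich G (Rich G p R b) R a Q := by
  induction a generalizing Q with
  | zero => exact ⟨Rich.conn h, h⟩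
  | succ a ih =>
    obtain ⟨h1, f, h2, h3, h4⟩ := h
    exact ⟨h1, f, h2, h3, fun i => ih (h4 i)⟩

lemma Rich.root {V : Type} {G : SimpleGraph V} {p : Set V → Prop} {R D : ℕ} {Q : Set V}
    (hR : 0 < R) (hp : ∀ T T', T ⊆ T' → p T → p T') (h : Rich G p R D Q) : p Q := by
  induction D generalizing Q with
  | zero => exact h.2
  | succ D ih =>
    obtain ⟨h1, f, h2, h3, h4⟩ := h
    exact hp _ _ (h3 ⟨0, hR⟩) (ih (h4 ⟨0, hR⟩))

lemma Rich.pigeon {V : Type} {G : SimpleGraph V} {p : Set V → Prop} {R R' D : ℕ} {Q : Set V}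
    (S : Finset V) (hS : S.Nonempty) (c : V → Set V → Prop) (hR : S.card * R' ≤ R)
    (hc : ∀ T ⊆ Q, p T → ∃ s ∈ S, c s T)
    (h : Rich G p R D Q) : ∃ s ∈ S, Rich G (fun T => p T ∧ c s T) R' D Q := by
  classical
  induction D generalizing Q with
  | zero =>
    obtain ⟨s, hs, hcs⟩ := hc _ le_rfl h.2
    exact ⟨s, hs, h.1, h.2, hcs⟩
  | succ D ih =>
    obtain ⟨h1, f, h2, h3, h4⟩ := h
    have h5 := fun i => ih (fun T hT => hc T (hT.trans (h3 i))) (h4 i)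
    choose g hg1 hg2 using h5
    obtain ⟨s, hs, hcard⟩ := Finset.exists_le_card_fiber_of_mul_le_card_of_maps_to
      (s := (Finset.univ : Finset (Fin R))) (t := S) (f := g) (n := R')
      (fun i _ => hg1 i) hS (by simpa using hR)
    refine ⟨s, hs, h1, ?_⟩
    obtain ⟨t, ht, htc⟩ := Finset.exists_subset_card_eq hcard
    let e := t.equivFinOfCardEq htc
    refine ⟨fun i => f (e.symm i), ?_, fun i => h3 _, ?_⟩
    · intro i j hij
      apply h2
      intro hc
      exact hij (e.symm.injective (Subtype.ext hc))
    · intro i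
      have hm := ht (e.symm i).2
      simp only [Finset.mem_filter, Finset.mem_univ, true_and] at hm
      have := hg2 (e.symm i)
      rwa [hm] at this

/-- `x` cannot be separated from `Q` by fewer than `M` vertices other than `x`. -/
def Good {V : Type} (G : SimpleGraph V) (M : ℕ) (x : V) (Q : Set V) : Prop :=
  ∀ S : Finset V, S.card < M → x ∉ S → ∃ q ∈ Q, (restr G (↑S : Set V)ᶜ).Reachable x q

lemma Good.mono {V : Type} {G : SimpleGraph V} {M : ℕ} {x : V} {Q Q' : Set V} (h : Q ⊆ Q')
    (hg : Good G M x Q) : Good G M x Q' := by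
  intro S h1 h2
  obtain ⟨q, hq, hr⟩ := hg S h1 h2
  exact ⟨q, h hq, hr⟩

lemma round_aux {V : Type} {G : SimpleGraph V} {L : ℕ}
    (HL : ∀ m, Nonempty (pathGraph m ↪g G) → m ≤ L) (X : Finset V) (p : Set V → Prop)
    (hp : ∀ T T', T ⊆ T' → p T → p T') {R R' M D' : ℕ} (hM : 1 ≤ M) (hR' : 0 < R')
    (hR : M ^ L * R' ≤ R) (r : V) (T0 : Set V) (hT0 : ConnSet G T0)
    (hX : ∀ v ∈ T0, v ∉ X) (hr : r ∈ T0) (j : ℕ) :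
    ∀ (i : ℕ), i + j = L → ∀ (S : Finset V) (T : Set V), S.card ≤ M ^ i → (∀ s ∈ S, s ∉ X) →
      T ⊆ T0 → Rich G p R (j * D') T →
      (∀ q ∈ T, ∀ w : G.Walk r q, (∀ v ∈ w.support, v ∉ X) →
        ∃ s ∈ S, ∃ w2 : G.Walk s q, (∀ v ∈ w2.support, v ∉ X) ∧ i + w2.length ≤ w.length) →
      ∃ x, x ∉ X ∧ ∃ Q' ⊆ T0, Rich G (fun U => p U ∧ Good G M x U) R' D' Q' := by
  classical
  have hRpos : 0 < R := lt_of_lt_of_le (Nat.mul_pos (Nat.pow_pos hM) hR') hR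
  induction j with
  | zero =>
    intro i hi S T hS hSX hT hrich hinv
    exfalso
    obtain ⟨q, hq⟩ := hrich.conn.1
    have hr2 : (restr G (↑X : Set V)ᶜ).Reachable r q :=
      (hT0.2 r hr q (hT hq)).mono (restr_mono fun v hv => by simpa using hX v hv)
    have hrX : r ∈ (↑X : Set V)ᶜ := by simpa using hX r hr
    have hd := dist_lt_of_noPath HL hrX hr2
    obtain ⟨w, hw⟩ := hr2.exists_walk_length_eq_dist
    obtain ⟨w', hw', hw'X⟩ := restr_walk w hrX
    obtain ⟨s, -, w2, -, h2⟩ := hinv q hq w' (fun v hv => by simpa using hw'X v hv)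
    omega
  | succ j ih =>
    intro i hi S T hS hSX hT hrich hinv
    rw [Nat.succ_mul] at hrich
    have hrich2 := hrich.split
    by_cases H : ∃ U ⊆ T, Rich G p R (j * D') U ∧ ∀ s ∈ S, ¬ Good G M s U
    · obtain ⟨U, hUT, hU, hbad⟩ := H
      have hsep : ∀ s, ∃ Z : Finset V, Z.card ≤ M ∧ s ∉ Z ∧
          (s ∈ S → ∀ q ∈ U, ¬ (restr G (↑Z : Set V)ᶜ).Reachable s q) := by
        intro s
        by_cases hs : s ∈ S
        · have := hbad s hs
          unfold Good at this
          push Not at this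
          obtain ⟨Z, h1, h2, h3⟩ := this
          exact ⟨Z, h1.le, h2, fun _ => h3⟩
        · exact ⟨∅, by simp, by simp, fun h => absurd h hs⟩
      choose Z hZ1 hZ2 hZ3 using hsep
      refine ih (i + 1) (by omega) (S.biUnion Z \ X) U ?_ ?_ (hUT.trans hT) hU ?_
      · calc (S.biUnion Z \ X).card ≤ (S.biUnion Z).card := Finset.card_le_card Finset.sdiff_subset
          _ ≤ S.card * M := Finset.card_biUnion_le_card_mul _ _ _ fun s _ => hZ1 s
          _ ≤ M ^ i * M := Nat.mul_le_mul_right _ hS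
          _ = M ^ (i + 1) := (pow_succ _ _).symm
      · intro s hs
        exact (Finset.mem_sdiff.1 hs).2
      · intro q hq w hw
        obtain ⟨s, hs, w2, hw2, hlen⟩ := hinv q (hUT hq) w hw
        have : ∃ u ∈ w2.support, u ∈ Z s := by
          by_contra hc
          push Not at hc
          exact hZ3 s hs q hq (walk_restr w2 fun v hv => by simpa using hc v hv)
        obtain ⟨u, hu, huZ⟩ := this
        refine ⟨u, ?_, w2.dropUntil u hu, ?_, ?_⟩
        · exact Finset.mem_sdiff.2 ⟨Finset.mem_biUnion.2 ⟨s, hs, huZ⟩, hw2 u hu⟩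
        · intro v hv
          exact hw2 v (w2.support_dropUntil_subset_support hu hv)
        · have h1 := congrArg Walk.length (w2.take_spec hu)
          rw [Walk.length_append] at h1
          have h2 : (w2.takeUntil u hu).length ≠ 0 := by
            intro h0
            have := Walk.eq_of_length_eq_zero h0
            exact hZ2 s (this ▸ huZ)
          omega
    · push Not at H
      have hSne : S.Nonempty := by
        obtain ⟨q, hq⟩ := hrich.conn.1
        have hr2 : (restr G (↑X : Set V)ᶜ).Reachable r q :=
          (hT0.2 r hr q (hT hq)).mono (restr_mono fun v hv => by simpa using hX v hv)
        have hrX : r ∈ (↑X : Set V)ᶜ := by simpa using hX r hr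
        obtain ⟨w⟩ := hr2
        obtain ⟨w', hw', hw'X⟩ := restr_walk w hrX
        obtain ⟨s, hs, -⟩ := hinv q hq w' (fun v hv => by simpa using hw'X v hv)
        exact ⟨s, hs⟩
      obtain ⟨s, hs, hfin⟩ := hrich2.pigeon S hSne (fun s U => Good G M s U) (by
          refine le_trans (Nat.mul_le_mul_right _ (hS.trans ?_)) hR
          exact Nat.pow_le_pow_right hM (by omega)) (fun U hU hU2 => H U hU hU2)
      exact ⟨s, hSX s hs, T, hT, hfin.mono fun U _ hU => ⟨hU.1.root hRpos hp, hU.2⟩⟩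

lemma rich_round {V : Type} {G : SimpleGraph V} {L : ℕ}
    (HL : ∀ m, Nonempty (pathGraph m ↪g G) → m ≤ L) (X : Finset V) (p : Set V → Prop)
    (hp : ∀ T T', T ⊆ T' → p T → p T') {R R' M D' : ℕ} (hM : 1 ≤ M) (hR' : 0 < R')
    (hR : M ^ L * R' ≤ R) (hXR : X.card < R) (Q : Set V) (hQ : Rich G p R (L * D' + 1) Q) :
    ∃ x, x ∉ X ∧ ∃ Q', Rich G (fun U => p U ∧ Good G M x U) R' D' Q' := by
  classical
  obtain ⟨h1, f, h2, h3, h4⟩ := hQ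
  have : ∃ i, ∀ v ∈ f i, v ∉ X := by
    by_contra hc
    push Not at hc
    choose g hg1 hg2 using hc
    have hinj : Function.Injective g := by
      intro i j hij
      by_contra hne
      exact Set.disjoint_left.1 (h2 i j hne) (hg1 i) (hij ▸ hg1 j)
    have := Finset.card_le_card_of_injOn (s := Finset.univ) (t := X) g (fun i _ => hg2 i)
      hinj.injOn
    simp at this
    omega
  obtain ⟨i, hi⟩ := this
  obtain ⟨r, hr⟩ := (h4 i).conn.1
  obtain ⟨x, hx, Q', -, hQ'⟩ := round_aux HL X p hp hM hR' hR r (f i) (h4 i).conn hi hr L 0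
    (by omega) {r} (f i) (by simp) (by simpa using hi r hr) le_rfl (h4 i) (by
      intro q hq w hw
      exact ⟨r, by simp, w, hw, by omega⟩)
  exact ⟨x, hx, Q', hQ'⟩

/-- The depth needed for `j` rounds. -/
def depthOf (L : ℕ) : ℕ → ℕ
  | 0 => 1
  | j + 1 => L * depthOf L j + 1

lemma rich_rounds {V : Type} {G : SimpleGraph V} {L M : ℕ} (hM : 1 ≤ M)
    (HL : ∀ m, Nonempty (pathGraph m ↪g G) → m ≤ L) (j : ℕ) :
    ∀ (X : Finset V) (Q : Set V), X.card + j ≤ M →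
      Rich G (fun U => ∀ x ∈ X, Good G M x U) (M ^ (L * j + 1)) (depthOf L j) Q →
      ∃ X' : Finset V, X'.card = X.card + j ∧
        ∃ Q', Rich G (fun U => ∀ x ∈ X', Good G M x U) M 1 Q' := by
  classical
  induction j with
  | zero =>
    intro X Q _ hQ
    exact ⟨X, rfl, Q, by simpa [depthOf] using hQ⟩
  | succ j ih =>
    intro X Q hc hQ
    obtain ⟨x, hx, Q', hQ'⟩ := rich_round (R' := M ^ (L * j + 1)) (D' := depthOf L j) HL X _
      (fun T T' hT h x hx => (h x hx).mono hT) hM (Nat.pow_pos hM)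
      (le_of_eq (by rw [← pow_add]; congr 1; ring)) (by
        have : M ^ 1 ≤ M ^ (L * (j + 1) + 1) := Nat.pow_le_pow_right hM (by omega)
        rw [pow_one] at this
        omega) Q hQ
    obtain ⟨X', h1, h2⟩ := ih (insert x X) Q' (by rw [Finset.card_insert_of_notMem hx]; omega)
      (hQ'.mono fun U _ hU y hy => by
        rcases Finset.mem_insert.1 hy with rfl | hy
        · exact hU.2
        · exact hU.1 y hy)
    exact ⟨X', by rw [h1, Finset.card_insert_of_notMem hx]; omega, h2⟩

lemma insep_of_rich {V : Type} {G : SimpleGraph V} {M : ℕ} (X : Finset V) (Q : Set V)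
    (h : Rich G (fun U => ∀ x ∈ X, Good G M x U) M 1 Q) :
    ∀ x ∈ X, ∀ y ∈ X, ∀ S : Finset V, S.card < M → x ∉ S → y ∉ S →
      (restr G (↑S : Set V)ᶜ).Reachable x y := by
  classical
  intro x hx y hy S hS hxS hyS
  obtain ⟨h1, f, h2, h3, h4⟩ := h
  have : ∃ i, ∀ v ∈ f i, v ∉ S := by
    by_contra hc
    push Not at hc
    choose g hg1 hg2 using hc
    have hinj : Function.Injective g := by
      intro i j hij
      by_contra hne
      exact Set.disjoint_left.1 (h2 i j hne) (hg1 i) (hij ▸ hg1 j)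
    have := Finset.card_le_card_of_injOn (s := Finset.univ) (t := S) g (fun i _ => hg2 i)
      hinj.injOn
    simp at this
    omega
  obtain ⟨i, hi⟩ := this
  obtain ⟨q, hq, hxq⟩ := (h4 i).2 x hx S hS hxS
  obtain ⟨q', hq', hyq⟩ := (h4 i).2 y hy S hS hyS
  have : (restr G (↑S : Set V)ᶜ).Reachable q q' :=
    ((h4 i).1.2 q hq q' hq').mono (restr_mono fun v hv => by simpa using hi v hv)
  exact hxq.trans (this.trans hyq.symm)

/-- A path is a hierarchy. -/
lemma rich_of_path {V : Type} {G : SimpleGraph V} (v : ℕ → V) (N : ℕ)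
    (hinj : ∀ i j, i < N → j < N → v i = v j → i = j)
    (hadj : ∀ i, i + 1 < N → G.Adj (v i) (v (i + 1))) (R : ℕ) (hR : 0 < R) (D : ℕ) :
    ∀ a, a + R ^ D ≤ N → Rich G (fun _ => True) R D (v '' Set.Ico a (a + R ^ D)) := by
  have hconn : ∀ a b, a < b → b ≤ N → ConnSet G (v '' Set.Ico a b) := by
    intro a b hab hb
    refine ⟨⟨v a, a, by simp [hab], rfl⟩, ?_⟩
    have key : ∀ i, a ≤ i → i < b → (restr G (v '' Set.Ico a b)).Reachable (v a) (v i) := by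
      intro i hi
      induction i, hi using Nat.le_induction with
      | base => intro _; exact Reachable.refl _
      | succ i hi ih =>
        intro hib
        refine (ih (by omega)).trans (Adj.reachable ⟨hadj i (by omega), ⟨i, ?_, rfl⟩, ⟨i+1, ?_, rfl⟩⟩)
        · simp; omega
        · simp; omega
    rintro _ ⟨i, hi, rfl⟩ _ ⟨j, hj, rfl⟩
    exact (key i hi.1 hi.2).symm.trans (key j hj.1 hj.2)
  induction D with
  | zero =>
    intro a ha
    exact ⟨hconn _ _ (by simp) ha, trivial⟩
  | succ D ih =>
    intro a ha
    refine ⟨hconn _ _ (by have := Nat.pow_pos (n := D + 1) hR; omega) ha,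
      fun i => v '' Set.Ico (a + i * R ^ D) (a + i * R ^ D + R ^ D), ?_, ?_, ?_⟩
    all_goals
      have hb : ∀ i : Fin R, (i : ℕ) * R ^ D + R ^ D ≤ R ^ (D + 1) := by
        intro i
        rw [pow_succ, ← Nat.succ_mul, mul_comm]
        exact Nat.mul_le_mul_left _ i.2
    · intro i j hij
      rw [Set.disjoint_left]
      rintro _ ⟨x, hx, rfl⟩ ⟨y, hy, hxy⟩
      have hi := hb i
      have hj := hb j
      simp only [Set.mem_Ico] at hx hy
      have := hinj y x (by omega) (by omega) hxy
      subst this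
      apply hij
      apply Fin.ext
      by_contra hne
      rcases Nat.lt_or_gt_of_ne hne with h | h
      · have := Nat.mul_le_mul_right (R ^ D) (Nat.succ_le_of_lt h)
        rw [Nat.succ_mul] at this
        omega
      · have := Nat.mul_le_mul_right (R ^ D) (Nat.succ_le_of_lt h)
        rw [Nat.succ_mul] at this
        omega
    · intro i
      apply Set.image_mono
      apply Set.Ico_subset_Ico
      · omega
      · have := hb i; omega
    · intro i
      exact ih _ (by have := hb i; omega)

open Classical in
lemma edge_count {V : Type} {G : SimpleGraph V} {k : ℕ} (hdeg : Degenerate G k) (n : ℕ) :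
    ∀ W : Finset V, W.card = n →
      ((W ×ˢ W).filter (fun p => G.Adj p.1 p.2)).card ≤ 2 * k * n := by
  induction n with
  | zero =>
    intro W hW
    rw [Finset.card_eq_zero] at hW
    subst hW
    simp
  | succ n ih =>
    intro W hW
    have hne : (↑W : Set V).Nonempty := by
      rw [Finset.coe_nonempty, ← Finset.card_pos]; omega
    obtain ⟨v, hv, hvk⟩ := hdeg _ hne
    have hv' : v ∈ W := by simpa using hv
    set N := W.filter (fun w => G.Adj v w) with hN
    have hNk : N.card ≤ k := by
      rw [← Set.ncard_coe_finset]
      convert hvk using 2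
      ext w
      simp [hN]
    have hW' := ih (W.erase v) (by rw [Finset.card_erase_of_mem hv']; omega)
    have hsub : (W ×ˢ W).filter (fun p => G.Adj p.1 p.2) ⊆
        (((W.erase v) ×ˢ (W.erase v)).filter (fun p => G.Adj p.1 p.2)) ∪
          (N.image (fun w => (v, w)) ∪ N.image (fun w => (w, v))) := by
      rintro ⟨a, b⟩ hab
      simp only [Finset.mem_filter, Finset.mem_product] at hab
      simp only [Finset.mem_union, Finset.mem_filter, Finset.mem_product, Finset.mem_erase,
        Finset.mem_image, Prod.mk.injEq, hN]
      by_cases ha : a = v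
      · right; left
        exact ⟨b, ⟨hab.1.2, ha ▸ hab.2⟩, ha.symm, rfl⟩
      · by_cases hb : b = v
        · right; right
          exact ⟨a, ⟨hab.1.1, hb ▸ hab.2.symm⟩, rfl, hb.symm⟩
        · left
          exact ⟨⟨⟨ha, hab.1.1⟩, ⟨hb, hab.1.2⟩⟩, hab.2⟩
    have h1 := Finset.card_le_card hsub
    have h2 := Finset.card_union_le (((W.erase v) ×ˢ (W.erase v)).filter (fun p => G.Adj p.1 p.2))
      (N.image (fun w => (v, w)) ∪ N.image (fun w => (w, v)))
    have h3 := Finset.card_union_le (N.image (fun w => (v, w))) (N.image (fun w => (w, v)))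
    have h4 := Finset.card_image_le (s := N) (f := fun w => (v, w))
    have h5 := Finset.card_image_le (s := N) (f := fun w => (w, v))
    have : 2 * k * (n + 1) = 2 * k * n + 2 * k := by ring
    omega

lemma conflict_count {V ι : Type} {G : SimpleGraph V} {k : ℕ}
    (hdeg : Degenerate G k) (A : ι → Finset V) (hA : ∀ i j, i ≠ j → Disjoint (A i) (A j))
    (W : Finset V) (hW : ∀ i, A i ⊆ W) (P : Finset (ι × ι))
    (hP : ∀ q ∈ P, ∃ u ∈ A q.1, ∃ v ∈ A q.2, G.Adj u v) : P.card ≤ 2 * k * W.card := by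
  classical
  refine le_trans ?_ (edge_count hdeg _ W rfl)
  rcases P.eq_empty_or_nonempty with hPe | ⟨q0, hq0⟩
  · simp [hPe]
  obtain ⟨u0, -⟩ := hP q0 hq0
  have hP' : ∀ q : ι × ι, ∃ z : V × V, q ∈ P → z.1 ∈ A q.1 ∧ z.2 ∈ A q.2 ∧ G.Adj z.1 z.2 := by
    intro q
    by_cases hq : q ∈ P
    · obtain ⟨u, hu, v, hv, h⟩ := hP q hq
      exact ⟨(u, v), fun _ => ⟨hu, hv, h⟩⟩
    · exact ⟨(u0, u0), fun h => absurd h hq⟩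
  choose z hz using hP'
  apply Finset.card_le_card_of_injOn z
  · intro q hq
    have := hz q hq
    simp only [Finset.coe_filter, Finset.mem_product, Set.mem_ofPred_eq]
    exact ⟨⟨hW _ this.1, hW _ this.2.1⟩, this.2.2⟩
  · intro q hq q' hq' h
    have h1 := hz q hq
    have h2 := hz q' hq'
    rw [h] at h1
    have key : ∀ i j u, u ∈ A i → u ∈ A j → i = j := by
      intro i j u hi hj
      by_contra hne
      exact Finset.disjoint_left.1 (hA i j hne) hi hj
    exact Prod.ext (key _ _ _ h1.1 h2.1) (key _ _ _ h1.2.1 h2.2.1)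

lemma indep_exists {V : Type} {G : SimpleGraph V} {k : ℕ} (hdeg : Degenerate G k) (t : ℕ) :
    ∀ X : Finset V, (k + 1) * t ≤ X.card →
      ∃ Y ⊆ X, Y.card = t ∧ ∀ x ∈ Y, ∀ y ∈ Y, ¬ G.Adj x y := by
  classical
  induction t with
  | zero => intro X _; exact ⟨∅, by simp, by simp, by simp⟩
  | succ t ih =>
    intro X hX
    have hX' : (k + 1) * t + k + 1 ≤ X.card := by
      have : (k + 1) * (t + 1) = (k + 1) * t + k + 1 := by ring
      omega
    have hne : (↑X : Set V).Nonempty := by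
      rw [Finset.coe_nonempty, ← Finset.card_pos]; omega
    obtain ⟨v, hv, hvk⟩ := hdeg _ hne
    have hv' : v ∈ X := by simpa using hv
    set N := X.filter (fun w => G.Adj v w) with hN
    have hNk : N.card ≤ k := by
      rw [← Set.ncard_coe_finset]
      convert hvk using 2
      ext w
      simp [hN]
    have hc : X.card ≤ (X \ insert v N).card + (k + 1) := by
      have h1 := Finset.card_le_card_sdiff_add_card (s := X) (t := insert v N)
      have h2 := Finset.card_insert_le v N
      omega
    obtain ⟨Y, hY, hYc, hYi⟩ := ih (X \ insert v N) (by omega)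
    have hvY : v ∉ Y := fun h => by simpa using hY h
    have hnadj : ∀ y ∈ Y, ¬ G.Adj v y := by
      intro y hy h
      have := hY hy
      simp only [Finset.mem_sdiff, Finset.mem_insert, hN, Finset.mem_filter, not_or, not_and] at this
      exact this.2.2 this.1 h
    refine ⟨insert v Y, ?_, by rw [Finset.card_insert_of_notMem hvY, hYc], ?_⟩
    · intro y hy
      rcases Finset.mem_insert.1 hy with rfl | hy
      · exact hv'
      · exact (Finset.mem_sdiff.1 (hY hy)).1
    · intro x hx y hy
      rcases Finset.mem_insert.1 hx with rfl | hx2 <;>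
        rcases Finset.mem_insert.1 hy with rfl | hy2
      · exact G.loopless.irrefl _
      · exact hnadj y hy2
      · exact fun h => hnadj x hx2 h.symm
      · exact hYi x hx2 y hy2

/-- `A` links `x` and `y`. -/
def Link {V : Type} (G : SimpleGraph V) (x y : V) (A : Finset V) : Prop :=
  (restr G ({x, y} ∪ (↑A : Set V))).Reachable x y

lemma chain_reach {V : Type} {G : SimpleGraph V} {U : Set V} (f : ℕ → V) (i0 d : ℕ)
    (hU : ∀ i, i0 ≤ i → i ≤ d → f i ∈ U) (hadj : ∀ i, i0 ≤ i → i < d → G.Adj (f i) (f (i + 1))) :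
    ∀ i, i0 ≤ i → i ≤ d → (restr G U).Reachable (f i0) (f i) := by
  intro i hi
  induction i, hi using Nat.le_induction with
  | base => intro _; exact Reachable.refl _
  | succ i hi ih =>
    intro hid
    exact (ih (by omega)).trans
      (Adj.reachable ⟨hadj i hi (by omega), hU i hi (by omega), hU (i + 1) (by omega) hid⟩)

lemma Link.symm {V : Type} {G : SimpleGraph V} {x y : V} {A : Finset V} (h : Link G x y A) :
    Link G y x A := by
  unfold Link at *
  rw [Set.pair_comm]
  exact h.symm

lemma Link.start {V : Type} {G : SimpleGraph V} {x y : V} {A : Finset V} (h : Link G x y A)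
    (hxy : x ≠ y) (hna : ¬ G.Adj x y) :
    ∃ a ∈ A, G.Adj x a ∧ (restr G ({y} ∪ (↑A : Set V))).Reachable a y := by
  obtain ⟨f, f0, fd, fadj, fdist⟩ := geod h
  set d := (restr G ({x, y} ∪ (↑A : Set V))).dist x y
  have hd0 : d ≠ 0 := by
    intro h0
    rw [h0, f0] at fd
    exact hxy fd
  have hmem : ∀ i, 1 ≤ i → i ≤ d → f i ∈ {y} ∪ (↑A : Set V) := by
    intro i hi hid
    have h1 := restr_reach_mem (fdist i hid).2.2 (by simp)
    have h2 : f i ≠ x := by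
      intro hc
      have := (fdist i hid).1
      rw [hc, dist_self] at this
      omega
    simp only [Set.mem_union, Set.mem_insert_iff, Set.mem_singleton_iff] at h1 ⊢
    tauto
  have hadj1 : G.Adj x (f 1) := by
    have := (fadj 0 (by omega)).1
    rwa [f0] at this
  have h1A : f 1 ∈ A := by
    have h1 := hmem 1 le_rfl (by omega)
    simp only [Set.mem_union, Set.mem_singleton_iff] at h1
    rcases h1 with h1 | h1
    · exact absurd (h1 ▸ hadj1) hna
    · simpa using h1
  refine ⟨f 1, h1A, hadj1, ?_⟩
  have := chain_reach f 1 d hmem (fun i _ hi => (fadj i hi).1) d (by omega) le_rfl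
  rwa [fd] at this

lemma link_exists {V : Type} {G : SimpleGraph V} {L M : ℕ}
    (HL : ∀ m, Nonempty (pathGraph m ↪g G) → m ≤ L) (X : Finset V)
    (hins : ∀ x ∈ X, ∀ y ∈ X, ∀ S : Finset V, S.card < M → x ∉ S → y ∉ S →
      (restr G (↑S : Set V)ᶜ).Reachable x y) (x y : V) (hx : x ∈ X) (hy : y ∈ X)
    (S : Finset V) (hS : X.card + S.card < M) (hSX : Disjoint S X) :
    ∃ A : Finset V, Link G x y A ∧ A.card ≤ L ∧ Disjoint A X ∧ Disjoint A S := by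
  classical
  have hxS : x ∉ (X \ {x, y}) ∪ S := by
    simp [Finset.disjoint_right.1 hSX hx]
  have hyS : y ∉ (X \ {x, y}) ∪ S := by
    simp [Finset.disjoint_right.1 hSX hy]
  have hc : ((X \ {x, y}) ∪ S).card < M := by
    have h1 := Finset.card_union_le (X \ {x, y}) S
    have h2 := Finset.card_le_card (Finset.sdiff_subset (s := X) (t := {x, y}))
    omega
  have hr := hins x hx y hy _ hc hxS hyS
  have hxm : x ∈ (↑((X \ {x, y}) ∪ S) : Set V)ᶜ := by
    rw [Set.mem_compl_iff, Finset.mem_coe]; exact hxS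
  have hd := dist_lt_of_noPath HL hxm hr
  obtain ⟨f, f0, fd, fadj, fdist⟩ := geod hr
  set d := (restr G (↑((X \ {x, y}) ∪ S) : Set V)ᶜ).dist x y
  have hf : ∀ i ≤ d, f i ∉ (X \ {x, y}) ∪ S := by
    intro i hi
    have := restr_reach_mem (fdist i hi).2.2 hxm
    rwa [Set.mem_compl_iff, Finset.mem_coe] at this
  refine ⟨(Finset.range (d + 1)).image f \ X, ?_, ?_, Finset.sdiff_disjoint, ?_⟩
  · have := chain_reach (G := G) (U := {x, y} ∪ (↑((Finset.range (d + 1)).image f \ X) : Set V))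
      f 0 d ?_ (fun i _ hi => (fadj i hi).1) d (by omega) le_rfl
    · rwa [f0, fd] at this
    · intro i _ hi
      have h1 := hf i hi
      simp only [Finset.mem_union, Finset.mem_sdiff, Finset.mem_insert, Finset.mem_singleton,
        not_or, not_and, not_not] at h1
      by_cases hX : f i ∈ X
      · left; have := h1.1 hX; simp only [Set.mem_insert_iff, Set.mem_singleton_iff]; tauto
      · right
        rw [Finset.mem_coe, Finset.mem_sdiff]
        exact ⟨Finset.mem_image.2 ⟨i, by simp; omega, rfl⟩, hX⟩
  · have h1 := Finset.card_le_card (Finset.sdiff_subset (s := (Finset.range (d + 1)).image f)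
      (t := X))
    have h2 := Finset.card_image_le (s := Finset.range (d + 1)) (f := f)
    rw [Finset.card_range] at h2
    omega
  · rw [Finset.disjoint_left]
    intro v hv hvS
    obtain ⟨i, hi, rfl⟩ := Finset.mem_image.1 (Finset.mem_sdiff.1 hv).1
    exact hf i (by simpa [Nat.lt_succ_iff] using hi) (Finset.mem_union_right _ hvS)

lemma links_many {V ι : Type} {G : SimpleGraph V} {L M : ℕ}
    (HL : ∀ m, Nonempty (pathGraph m ↪g G) → m ≤ L) (X : Finset V)
    (hins : ∀ x ∈ X, ∀ y ∈ X, ∀ S : Finset V, S.card < M → x ∉ S → y ∉ S →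
      (restr G (↑S : Set V)ᶜ).Reachable x y) (e : ι → V × V)
    (he : ∀ i, (e i).1 ∈ X ∧ (e i).2 ∈ X) (I : Finset ι) :
    X.card + I.card * L < M →
    ∃ A : ι → Finset V, (∀ i ∈ I, Link G (e i).1 (e i).2 (A i) ∧ (A i).card ≤ L ∧
      Disjoint (A i) X) ∧ ∀ i ∈ I, ∀ j ∈ I, i ≠ j → Disjoint (A i) (A j) := by
  classical
  induction I using Finset.induction_on with
  | empty => intro _; exact ⟨fun _ => ∅, by simp, by simp⟩
  | insert t I ht ih =>
    intro hM
    rw [Finset.card_insert_of_notMem ht, Nat.succ_mul] at hM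
    obtain ⟨A, hA1, hA2⟩ := ih (by omega)
    have hc : (I.biUnion A).card ≤ I.card * L :=
      Finset.card_biUnion_le_card_mul _ _ _ fun i hi => (hA1 i hi).2.1
    obtain ⟨B, hB1, hB2, hB3, hB4⟩ := link_exists HL X hins _ _ (he t).1 (he t).2 (I.biUnion A)
      (by omega) (by
        rw [Finset.disjoint_biUnion_left]
        exact fun i hi => (hA1 i hi).2.2)
    rw [Finset.disjoint_biUnion_right] at hB4
    have hne : ∀ i ∈ I, i ≠ t := fun i hi hc => ht (hc ▸ hi)
    refine ⟨Function.update A t B, ?_, ?_⟩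
    · intro i hi
      rcases Finset.mem_insert.1 hi with rfl | hi
      · simpa using ⟨hB1, hB2, hB3⟩
      · rw [Function.update_of_ne (hne i hi)]
        exact hA1 i hi
    · intro i hi j hj hij
      rcases Finset.mem_insert.1 hi with rfl | hi2 <;>
        rcases Finset.mem_insert.1 hj with rfl | hj2
      · exact absurd rfl hij
      · rw [Function.update_of_ne (hne j hj2), Function.update_self]
        exact hB4 j hj2
      · rw [Function.update_of_ne (hne i hi2), Function.update_self]
        exact (hB4 i hi2).symm
      · rw [Function.update_of_ne (hne i hi2), Function.update_of_ne (hne j hj2)]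
        exact hA2 i hi2 j hj2 hij


lemma short_link {V : Type} {G : SimpleGraph V} {ℓ : ℕ}
    (hring : ∀ m : ℕ, 3 ≤ m → ℓ ≤ m → IsEmpty (ringGraph m ↪g G))
    {x y : V} (hxy : x ≠ y) (hna : ¬ G.Adj x y) (A1 A2 : Finset V)
    (hd12 : Disjoint A1 A2) (hac : ∀ u ∈ A1, ∀ v ∈ A2, ¬ G.Adj u v)
    (hx1 : x ∉ A1) (hx2 : x ∉ A2)
    (h1 : Link G x y A1) (h2 : Link G x y A2) :
    ∃ B ⊆ A1, Link G x y B ∧ B.card ≤ ℓ := by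
  classical
  obtain ⟨f, f0, fd, fadj, fdist⟩ := geod h1
  obtain ⟨b, hbA, hxb, hby⟩ := h2.start hxy hna
  set H := restr G ({x, y} ∪ (↑A1 : Set V)) with hH
  set d := H.dist x y with hd
  have hd0 : d ≠ 0 := by
    intro h0
    rw [h0, f0] at fd
    exact hxy fd
  have hd1 : d ≠ 1 := by
    intro h0
    have := (fadj 0 (by omega)).1
    rw [f0, zero_add, ← h0, fd] at this
    exact hna this
  have hmem : ∀ i, 1 ≤ i → i ≤ d → f i = y ∨ f i ∈ A1 := by
    intro i hi hid
    have h1 := restr_reach_mem (fdist i hid).2.2 (by simp)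
    have h2 : f i ≠ x := by
      intro hc
      have := (fdist i hid).1
      rw [hc, dist_self] at this
      omega
    simp only [Set.mem_union, Set.mem_insert_iff, Finset.mem_coe, Set.mem_singleton_iff] at h1
    tauto
  have hlt : d + 2 < ℓ := by
    by_contra hcon
    push Not at hcon
    set W : Set V := {v | v = y ∨ (v ∈ A1 ∧ H.Reachable x v) ∨ v ∈ A2} with hW
    have hn21 : ∀ v ∈ A1, v ∉ A2 := fun v hv => Finset.disjoint_left.1 hd12 hv
    obtain ⟨m, hm, ⟨φ⟩⟩ := ring_of_height (G := G) W x
      (fun v => if v ∈ A2 then d + 1 else min (H.dist x v) d) (d + 2) (by omega)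
      (by simp only [hW, Set.mem_ofPred_eq]; tauto)
      (by
        have hyr : H.Reachable x y := h1
        have hstep : ∀ u v, (u = y ∨ u ∈ A1) → (v = y ∨ v ∈ A1) → H.Reachable x u → G.Adj u v →
            H.dist x v ≤ H.dist x u + 1 := by
          intro u v hu hv hr hadj
          refine dist_adj_le hr ⟨hadj, ?_, ?_⟩
          · simp only [Set.mem_union, Set.mem_insert_iff, Finset.mem_coe, Set.mem_singleton_iff]
            tauto
          · simp only [Set.mem_union, Set.mem_insert_iff, Finset.mem_coe, Set.mem_singleton_iff]
            tauto
        intro u hu v hv hadj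
        by_cases hu2 : u ∈ A2
        · simp only [hu2, if_true]
          split_ifs
          · omega
          · omega
        · by_cases hv2 : v ∈ A2
          · have hu1 : u = y := by
              rcases hu with hu | hu | hu
              · exact hu
              · exact absurd hadj (hac _ hu.1 _ hv2)
              · exact absurd hu hu2
            simp only [hu2, hv2, if_true, if_false]
            rw [hu1, ← hd]
            omega
          · simp only [hu2, hv2, if_false]
            have := hstep u v (by rcases hu with hu | hu | hu <;> tauto)
              (by rcases hv with hu | hu | hu <;> tauto)
              (by rcases hu with hu | hu | hu <;> [exact hu ▸ hyr; exact hu.2; tauto]) hadj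
            omega)
      (by
        intro u hu hadj
        rcases hu with hu | hu | hu
        · exact absurd (hu ▸ hadj) hna
        · left
          simp only [hn21 u hu.1, if_false]
          have hadj' : H.Adj x u := ⟨hadj, by simp, by simp [hu.1]⟩
          rw [dist_eq_one_iff_adj.2 hadj']
          omega
        · right
          simp only [hu, if_true]
          omega)
      (by
        have hf1 : f 1 ∈ A1 := by
          rcases hmem 1 le_rfl (by omega) with h | h
          · exfalso
            have := (fadj 0 (by omega)).1
            rw [f0, zero_add, h] at this
            exact hna this
          · exact h
        have hmW : ∀ i, 1 ≤ i → i ≤ d → f i ∈ W := by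
          intro i hi hid
          rcases hmem i hi hid with h | h
          · exact Or.inl h
          · exact Or.inr (Or.inl ⟨h, (fdist i hid).2.2⟩)
        have hr1 := chain_reach f 1 d hmW (fun i _ hi => (fadj i hi).1) d (by omega) le_rfl
        rw [fd] at hr1
        have hr2 : (restr G W).Reachable b y := hby.mono (restr_mono (by
          intro v hv
          simp only [Set.mem_union, Finset.mem_coe, Set.mem_singleton_iff] at hv
          simp only [hW, Set.mem_ofPred_eq]
          tauto))
        refine ⟨f 1, hmW 1 le_rfl (by omega), b, Or.inr (Or.inr hbA), ?_, hxb, ?_, ?_,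
          hr1.trans hr2.symm⟩
        · have := (fadj 0 (by omega)).1
          rwa [f0] at this
        · simp only [hn21 _ hf1, if_false]
          rw [(fdist 1 (by omega)).1]
          omega
        · simp only [hbA, if_true]
          omega)
    exact (hring m (by omega) (by omega)).false φ
  refine ⟨A1 ∩ (Finset.range (d + 1)).image f, Finset.inter_subset_left, ?_, ?_⟩
  · have := chain_reach (G := G)
      (U := {x, y} ∪ (↑(A1 ∩ (Finset.range (d + 1)).image f) : Set V))
      f 0 d ?_ (fun i _ hi => (fadj i hi).1) d (by omega) le_rfl
    · rwa [f0, fd] at this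
    · intro i _ hi
      by_cases hi0 : i = 0
      · left; rw [hi0, f0]; simp
      · rcases hmem i (by omega) hi with h | h
        · left; rw [h]; simp
        · right
          rw [Finset.mem_coe, Finset.mem_inter]
          exact ⟨h, Finset.mem_image.2 ⟨i, by simp; omega, rfl⟩⟩
  · have h1 := Finset.card_le_card (Finset.inter_subset_right (s₁ := A1)
      (s₂ := (Finset.range (d + 1)).image f))
    have h2 := Finset.card_image_le (s := Finset.range (d + 1)) (f := f)
    rw [Finset.card_range] at h2
    omega

lemma cycle_of_links {V : Type} {G : SimpleGraph V} (s : ℕ) (hs : 3 ≤ s) (x : ℕ → V)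
    (A : ℕ → Finset V) (hinj : ∀ t < s, ∀ t' < s, x t = x t' → t = t')
    (hind : ∀ t < s, ∀ t' < s, ¬ G.Adj (x t) (x t'))
    (hxA : ∀ t < s, ∀ t' < s, x t ∉ A t')
    (hAA : ∀ t < s, ∀ t' < s, t ≠ t' → Disjoint (A t) (A t'))
    (hac : ∀ t < s, ∀ t' < s, t ≠ t' → ∀ u ∈ A t, ∀ v ∈ A t', ¬ G.Adj u v)
    (hxac : ∀ t < s, ∀ t' < s, t ≠ t' → t ≠ (t' + 1) % s → ∀ u ∈ A t', ¬ G.Adj (x t) u)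
    (hlink : ∀ t < s, Link G (x t) (x ((t + 1) % s)) (A t)) :
    ∃ m, 2 * s ≤ m ∧ Nonempty (ringGraph m ↪g G) := by
  classical
  let Ht : V → ℕ → Prop := fun v n =>
    (∃ t < s, 0 < t ∧ v = x t ∧ n = 2 * t) ∨ (∃ t < s, v ∈ A t ∧ n = 2 * t + 1)
  have hAeq : ∀ t < s, ∀ t' < s, ∀ v, v ∈ A t → v ∈ A t' → t = t' := by
    intro t ht t' ht' v hv hv'
    by_contra hne
    exact Finset.disjoint_left.1 (hAA t ht t' ht' hne) hv hv'
  have huniq : ∀ v n n', Ht v n → Ht v n' → n = n' := by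
    rintro v n n' (⟨t, ht, h0, hv, hn⟩ | ⟨t, ht, hv, hn⟩)
      (⟨t', ht', h0', hv', hn'⟩ | ⟨t', ht', hv', hn'⟩)
    · have := hinj t ht t' ht' (hv.symm.trans hv')
      omega
    · exact absurd (hv ▸ hv') (hxA t ht t' ht')
    · exact absurd (hv' ▸ hv) (hxA t' ht' t ht)
    · have := hAeq t ht t' ht' v hv hv'
      omega
  let W : Set V := {v | ∃ n, Ht v n}
  let h : V → ℕ := fun v => if hv : ∃ n, Ht v n then hv.choose else 0
  have hh : ∀ v n, Ht v n → h v = n := by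
    intro v n hn
    have hv : ∃ n, Ht v n := ⟨n, hn⟩
    have : h v = hv.choose := by simp only [h, dif_pos hv]
    rw [this]
    exact huniq v _ _ hv.choose_spec hn
  have hmod : ∀ t, t + 1 < s → (t + 1) % s = t + 1 := fun t ht => Nat.mod_eq_of_lt ht
  have hmod' : ∀ t, t + 1 = s → (t + 1) % s = 0 := fun t ht => by rw [ht, Nat.mod_self]
  have hxW : ∀ t, t < s → 0 < t → x t ∈ W := fun t ht h0 => ⟨2 * t, Or.inl ⟨t, ht, h0, rfl, rfl⟩⟩
  have hAW : ∀ t, t < s → ∀ v ∈ A t, v ∈ W := fun t ht v hv =>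
    ⟨2 * t + 1, Or.inr ⟨t, ht, hv, rfl⟩⟩
  refine ring_of_height (G := G) W (x 0) h (2 * s) (by omega) ?_ ?_ ?_ ?_
  · rintro ⟨n, ⟨t, ht, h0, hv, hn⟩ | ⟨t, ht, hv, hn⟩⟩
    · have := hinj 0 (by omega) t ht hv
      omega
    · exact hxA 0 (by omega) t ht hv
  · rintro u ⟨n, hu⟩ v ⟨n', hv⟩ hadj
    rw [hh _ _ hu, hh _ _ hv]
    rcases hu with ⟨t, ht, h0, hu, hn⟩ | ⟨t, ht, hu, hn⟩ <;>
      rcases hv with ⟨t', ht', h0', hv, hn'⟩ | ⟨t', ht', hv, hn'⟩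
    · subst hu; subst hv
      exact absurd hadj (hind t ht t' ht')
    · subst hu
      by_cases h1 : t = t'
      · omega
      by_cases h2 : t = (t' + 1) % s
      · by_cases h3 : t' + 1 < s
        · rw [hmod _ h3] at h2
          omega
        · rw [hmod' t' (by omega)] at h2
          omega
      · exact absurd hadj (hxac t ht t' ht' h1 h2 v hv)
    · subst hv
      by_cases h1 : t' = t
      · omega
      by_cases h2 : t' = (t + 1) % s
      · by_cases h3 : t + 1 < s
        · rw [hmod _ h3] at h2
          omega
        · rw [hmod' t (by omega)] at h2
          omega
      · exact absurd hadj.symm (hxac t' ht' t ht h1 h2 u hu)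
    · by_cases h1 : t = t'
      · omega
      · exact absurd hadj (hac t ht t' ht' h1 u hu v hv)
  · rintro u ⟨n, hu⟩ hadj
    rw [hh _ _ hu]
    rcases hu with ⟨t, ht, h0, hu, hn⟩ | ⟨t, ht, hu, hn⟩
    · subst hu
      exact absurd hadj (hind 0 (by omega) t ht)
    · by_cases h1 : 0 = t
      · omega
      by_cases h2 : 0 = (t + 1) % s
      · by_cases h3 : t + 1 < s
        · rw [hmod _ h3] at h2
          omega
        · omega
      · exact absurd hadj (hxac 0 (by omega) t ht h1 h2 u hu)
  · have hl0 := hlink 0 (by omega)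
    rw [hmod 0 (by omega)] at hl0
    have hls := hlink (s - 1) (by omega)
    rw [hmod' (s - 1) (by omega)] at hls
    obtain ⟨a, ha, hxa, har⟩ := hl0.start
      (fun hc => by have := hinj _ (by omega) _ (by omega) hc; omega)
      (hind _ (by omega) _ (by omega))
    obtain ⟨b, hb, hxb, hbr⟩ := hls.symm.start
      (fun hc => by have := hinj _ (by omega) _ (by omega) hc; omega)
      (hind _ (by omega) _ (by omega))
    have har' : (restr G W).Reachable a (x 1) := har.mono (restr_mono (by
      rintro v (hv | hv)
      · rw [Set.mem_singleton_iff.1 hv]; exact hxW _ (by omega) (by omega)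
      · exact hAW 0 (by omega) v hv))
    have hbr' : (restr G W).Reachable b (x (s - 1)) := hbr.mono (restr_mono (by
      rintro v (hv | hv)
      · rw [Set.mem_singleton_iff.1 hv]; exact hxW _ (by omega) (by omega)
      · exact hAW (s - 1) (by omega) v hv))
    have hmid : ∀ t, 1 ≤ t → t < s → (restr G W).Reachable (x 1) (x t) := by
      intro t ht
      induction t, ht using Nat.le_induction with
      | base => intro _; exact Reachable.refl _
      | succ t ht ih =>
        intro hts
        have hl := hlink t (by omega)
        rw [hmod t hts] at hl
        refine (ih (by omega)).trans (hl.mono (restr_mono ?_))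
        rintro v (hv | hv)
        · rcases hv with hv | hv
          · rw [hv]; exact hxW _ (by omega) (by omega)
          · rw [Set.mem_singleton_iff.1 hv]; exact hxW _ (by omega) (by omega)
        · exact hAW t (by omega) v hv
    refine ⟨a, hAW 0 (by omega) a ha, b, hAW (s - 1) (by omega) b hb, hxa, hxb, ?_, ?_,
      har'.trans ((hmid (s - 1) (by omega) (by omega)).trans hbr'.symm)⟩
    · exact hh _ _ (Or.inr ⟨0, by omega, ha, rfl⟩)
    · exact hh _ _ (Or.inr ⟨s - 1, by omega, hb, by omega⟩)

lemma select_aux (s m : ℕ) (P : Finset (Fin m × Fin m × Fin m)) (i j l : Fin s)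
    (hij : i ≠ j) (hil : i ≠ l) (hjl : j ≠ l) :
    ((Finset.univ : Finset (Fin s → Fin m)).filter
      (fun f => (f i, f j, f l) ∈ P)).card * m ^ 3 ≤ P.card * m ^ s := by
  classical
  set S := (Finset.univ : Finset (Fin s → Fin m)).filter (fun f => (f i, f j, f l) ∈ P) with hS
  have h1 : (S ×ˢ (Finset.univ : Finset (Fin m × Fin m × Fin m))).card = S.card * m ^ 3 := by
    rw [Finset.card_product, Finset.card_univ, Fintype.card_prod, Fintype.card_prod,
      Fintype.card_fin]
    ring
  have h2 : (P ×ˢ (Finset.univ : Finset (Fin s → Fin m))).card = P.card * m ^ s := by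
    rw [Finset.card_product, Finset.card_univ, Fintype.card_fun, Fintype.card_fin,
      Fintype.card_fin]
  rw [← h1, ← h2]
  apply Finset.card_le_card_of_injOn (fun q =>
    ((q.1 i, q.1 j, q.1 l), Function.update (Function.update (Function.update q.1 i q.2.1)
      j q.2.2.1) l q.2.2.2))
  · rintro ⟨f, a, b, c⟩ hq
    simp only [Finset.mem_coe, Finset.mem_product, hS, Finset.mem_filter, Finset.mem_univ,
      true_and, and_true] at hq ⊢
    exact hq
  · rintro ⟨f, a, b, c⟩ hq ⟨f', a', b', c'⟩ hq' h
    simp only [Prod.mk.injEq] at h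
    obtain ⟨⟨hi, hj, hl⟩, hu⟩ := h
    have hui := congrFun hu i
    have huj := congrFun hu j
    have hul := congrFun hu l
    simp only [Function.update_apply, hij, hil, hjl, if_true, if_false] at hui huj hul
    have hf : f = f' := by
      funext t
      by_cases ht1 : t = i
      · rw [ht1, hi]
      by_cases ht2 : t = j
      · rw [ht2, hj]
      by_cases ht3 : t = l
      · rw [ht3, hl]
      have := congrFun hu t
      simpa only [Function.update_apply, ht1, ht2, ht3, if_false] using this
    rw [hf, hui, huj, hul]

lemma select (s m c : ℕ) (P : Finset (Fin m × Fin m × Fin m)) (hP : P.card ≤ c * m ^ 2)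
    (hm : s ^ 3 * c < m) :
    ∃ f : Fin s → Fin m, ∀ i j l : Fin s, i ≠ j → i ≠ l → j ≠ l → (f i, f j, f l) ∉ P := by
  classical
  by_contra hcon
  push Not at hcon
  let T : Finset (Fin s × Fin s × Fin s) :=
    Finset.univ.filter (fun q => q.1 ≠ q.2.1 ∧ q.1 ≠ q.2.2 ∧ q.2.1 ≠ q.2.2)
  let S : Fin s × Fin s × Fin s → Finset (Fin s → Fin m) := fun q =>
    Finset.univ.filter (fun f => (f q.1, f q.2.1, f q.2.2) ∈ P)
  have hcov : (Finset.univ : Finset (Fin s → Fin m)) ⊆ T.biUnion S := by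
    intro f _
    obtain ⟨i, j, l, h1, h2, h3, h4⟩ := hcon f
    exact Finset.mem_biUnion.2 ⟨(i, j, l), by simp [T, h1, h2, h3], by simpa [S] using h4⟩
  have h1 := Finset.card_le_card hcov
  rw [Finset.card_univ, Fintype.card_fun, Fintype.card_fin, Fintype.card_fin] at h1
  have h2 : (T.biUnion S).card * m ^ 3 ≤ T.card * (P.card * m ^ s) := by
    calc (T.biUnion S).card * m ^ 3 ≤ (∑ q ∈ T, (S q).card) * m ^ 3 :=
          Nat.mul_le_mul_right _ Finset.card_biUnion_le
      _ = ∑ q ∈ T, (S q).card * m ^ 3 := Finset.sum_mul _ _ _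
      _ ≤ ∑ _q ∈ T, P.card * m ^ s := by
          apply Finset.sum_le_sum
          intro q hq
          simp only [T, Finset.mem_filter, Finset.mem_univ, true_and] at hq
          exact select_aux s m P q.1 q.2.1 q.2.2 hq.1 hq.2.1 hq.2.2
      _ = T.card * (P.card * m ^ s) := by rw [Finset.sum_const, smul_eq_mul]
  have h3 : T.card ≤ s ^ 3 := by
    refine (Finset.card_le_univ T).trans ?_
    rw [Fintype.card_prod, Fintype.card_prod, Fintype.card_fin]
    apply le_of_eq
    ring
  have hm0 : 0 < m := by omega
  have hpos : 0 < m ^ s * m ^ 2 := by positivity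
  have h4 : m ^ s * m ^ 3 ≤ s ^ 3 * (c * m ^ 2 * m ^ s) :=
    calc m ^ s * m ^ 3 ≤ (T.biUnion S).card * m ^ 3 := Nat.mul_le_mul_right _ h1
      _ ≤ T.card * (P.card * m ^ s) := h2
      _ ≤ s ^ 3 * (c * m ^ 2 * m ^ s) :=
          Nat.mul_le_mul h3 (Nat.mul_le_mul_right _ hP)
  have h5 : (s ^ 3 * c) * (m ^ s * m ^ 2) < m * (m ^ s * m ^ 2) :=
    Nat.mul_lt_mul_of_pos_right hm hpos
  have h6 : s ^ 3 * (c * m ^ 2 * m ^ s) = (s ^ 3 * c) * (m ^ s * m ^ 2) := by ring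
  have h7 : m ^ s * m ^ 3 = m * (m ^ s * m ^ 2) := by ring
  omega

lemma conflict_count_inj {V ι α : Type} {G : SimpleGraph V} {k : ℕ}
    (hdeg : Degenerate G k) (A : ι → Finset V) (hA : ∀ i j, i ≠ j → Disjoint (A i) (A j))
    (W : Finset V) (hW : ∀ i, A i ⊆ W) (P : Finset α) (g : α → ι × ι)
    (hg : ∀ a ∈ P, ∀ b ∈ P, g a = g b → a = b)
    (hP : ∀ a ∈ P, ∃ u ∈ A (g a).1, ∃ v ∈ A (g a).2, G.Adj u v) : P.card ≤ 2 * k * W.card := by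
  classical
  rw [← Finset.card_image_of_injOn (s := P) (f := g) (fun a ha b hb h => hg a ha b hb h)]
  apply conflict_count hdeg A hA W hW
  intro q hq
  obtain ⟨a, ha, rfl⟩ := Finset.mem_image.1 hq
  exact hP a ha

lemma anti_pair {V : Type} {G : SimpleGraph V} {k : ℕ} (hdeg : Degenerate G k) (L : ℕ)
    (A : Fin (2 * k * L + 2) → Finset V) (hA : ∀ i j, i ≠ j → Disjoint (A i) (A j))
    (hc : ∀ i, (A i).card ≤ L) : ∃ i j, i ≠ j ∧ ∀ u ∈ A i, ∀ v ∈ A j, ¬ G.Adj u v := by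
  classical
  by_contra hcon
  push Not at hcon
  have h1 := conflict_count hdeg A hA (Finset.univ.biUnion A)
    (fun i => Finset.subset_biUnion_of_mem A (Finset.mem_univ i))
    (Finset.univ : Finset (Fin (2 * k * L + 2))).offDiag
    (fun q hq => hcon q.1 q.2 (Finset.mem_offDiag.1 hq).2.2)
  have h2 : (Finset.univ.biUnion A).card ≤ (2 * k * L + 2) * L := by
    have := Finset.card_biUnion_le_card_mul Finset.univ A L (fun i _ => hc i)
    rwa [Finset.card_univ, Fintype.card_fin] at this
  rw [Finset.offDiag_card, Finset.card_univ, Fintype.card_fin] at h1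
  have h3 := h1.trans (Nat.mul_le_mul_left (2 * k) h2)
  have h4 : (2 * k * L + 2) * (2 * k * L + 2) =
    2 * k * ((2 * k * L + 2) * L) + 2 * (2 * k * L + 2) := by ring
  omega

lemma short_links {V : Type} {G : SimpleGraph V} {k ℓ L M m : ℕ}
    (hdeg : Degenerate G k)
    (hring : ∀ m : ℕ, 3 ≤ m → ℓ ≤ m → IsEmpty (ringGraph m ↪g G))
    (HL : ∀ m, Nonempty (pathGraph m ↪g G) → m ≤ L) (X : Finset V) (hX : X.card = m)
    (hind : ∀ x ∈ X, ∀ y ∈ X, ¬ G.Adj x y)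
    (hins : ∀ x ∈ X, ∀ y ∈ X, ∀ S : Finset V, S.card < M → x ∉ S → y ∉ S →
      (restr G (↑S : Set V)ᶜ).Reachable x y)
    (hM : m + m * m * (2 * k * L + 2) * L < M)
    (x : Fin m → V) (hx : Function.Injective x) (hxX : ∀ i, x i ∈ X) :
    ∃ B : Fin m × Fin m → Finset V, (∀ p, (B p).card ≤ ℓ) ∧ (∀ p, Disjoint (B p) X) ∧
      (∀ p q, p ≠ q → Disjoint (B p) (B q)) ∧
      (∀ i j, i ≠ j → Link G (x i) (x j) (B (i, j))) := by
  classical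
  obtain ⟨A, hA1, hA2⟩ := links_many (ι := (Fin m × Fin m) × Fin (2 * k * L + 2)) HL X hins
    (fun q => (x q.1.1, x q.1.2)) (fun q => ⟨hxX _, hxX _⟩) Finset.univ (by
      rw [Finset.card_univ, Fintype.card_prod, Fintype.card_prod, Fintype.card_fin,
        Fintype.card_fin, hX]
      exact hM)
  have key : ∀ p : Fin m × Fin m, ∃ B : Finset V, B.card ≤ ℓ ∧ (∃ r, B ⊆ A (p, r)) ∧
      (p.1 ≠ p.2 → Link G (x p.1) (x p.2) B) := by
    intro p
    by_cases hp : p.1 = p.2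
    · exact ⟨∅, by simp, ⟨0, by simp⟩, fun h => absurd hp h⟩
    obtain ⟨r, r', hrr, hac⟩ := anti_pair hdeg L (fun r => A (p, r))
      (fun i j hij => hA2 _ (Finset.mem_univ _) _ (Finset.mem_univ _) (by simp [hij]))
      (fun i => (hA1 _ (Finset.mem_univ _)).2.1)
    have hr := hA1 (p, r) (Finset.mem_univ _)
    have hr' := hA1 (p, r') (Finset.mem_univ _)
    obtain ⟨B, hB, hBl, hBc⟩ := short_link hring (fun hc => hp (hx hc))
      (hind _ (hxX p.1) _ (hxX p.2)) (A (p, r)) (A (p, r'))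
      (hA2 _ (Finset.mem_univ _) _ (Finset.mem_univ _) (by simp [hrr])) hac
      (Finset.disjoint_right.1 hr.2.2 (hxX p.1)) (Finset.disjoint_right.1 hr'.2.2 (hxX p.1))
      hr.1 hr'.1
    exact ⟨B, hBc, ⟨r, hB⟩, fun _ => hBl⟩
  choose B hB1 hB2 hB3 using key
  choose r hr using hB2
  refine ⟨B, hB1, ?_, ?_, fun i j hij => hB3 (i, j) hij⟩
  · intro p
    exact (hA1 (p, r p) (Finset.mem_univ _)).2.2.mono_left (hr p)
  · intro p q hpq
    exact (hA2 (p, r p) (Finset.mem_univ _) (q, r q) (Finset.mem_univ _)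
      (by simp [hpq])).mono (hr p) (hr q)

lemma no_insep {V : Type} {G : SimpleGraph V} {k ℓ L M m : ℕ}
    (hdeg : Degenerate G k)
    (hring : ∀ m : ℕ, 3 ≤ m → ℓ ≤ m → IsEmpty (ringGraph m ↪g G))
    (HL : ∀ m, Nonempty (pathGraph m ↪g G) → m ≤ L) (X : Finset V) (hX : X.card = m)
    (hind : ∀ x ∈ X, ∀ y ∈ X, ¬ G.Adj x y)
    (hins : ∀ x ∈ X, ∀ y ∈ X, ∀ S : Finset V, S.card < M → x ∉ S → y ∉ S →
      (restr G (↑S : Set V)ᶜ).Reachable x y)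
    (hM : m + m * m * (2 * k * L + 2) * L < M)
    (hm : (ℓ + 3) ^ 3 * (6 * k * (ℓ + 1) + 1) < m) : False := by
  classical
  let ex := X.equivFinOfCardEq hX
  let x : Fin m → V := fun i => (ex.symm i : V)
  have hx : Function.Injective x := fun i j h => ex.symm.injective (Subtype.ext h)
  have hxX : ∀ i, x i ∈ X := fun i => (ex.symm i).2
  obtain ⟨B, hB1, hB2, hB3, hB4⟩ := short_links hdeg hring HL X hX hind hins hM x hx hxX
  let C : Fin m ⊕ (Fin m × Fin m) → Finset V := Sum.elim (fun i => {x i}) B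
  have hC : ∀ i j, i ≠ j → Disjoint (C i) (C j) := by
    rintro (i | p) (j | q) hij
    · simp only [C, Sum.elim_inl, Finset.disjoint_singleton]
      exact fun h => hij (by rw [hx h])
    · simp only [C, Sum.elim_inl, Sum.elim_inr, Finset.disjoint_singleton_left]
      exact Finset.disjoint_right.1 (hB2 q) (hxX i)
    · simp only [C, Sum.elim_inl, Sum.elim_inr, Finset.disjoint_singleton_right]
      exact Finset.disjoint_right.1 (hB2 p) (hxX j)
    · exact hB3 p q (fun h => hij (by rw [h]))
  let W : Finset V := X ∪ Finset.univ.biUnion B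
  have hW : ∀ i, C i ⊆ W := by
    rintro (i | p)
    · simp only [C, Sum.elim_inl, Finset.singleton_subset_iff]
      exact Finset.mem_union_left _ (hxX i)
    · exact (Finset.subset_biUnion_of_mem B (Finset.mem_univ p)).trans Finset.subset_union_right
  have hm0 : 1 ≤ m := by omega
  have hWc : W.card ≤ (ℓ + 1) * m ^ 2 := by
    have h1 : W.card ≤ X.card + (Finset.univ.biUnion B).card := Finset.card_union_le _ _
    have h2 := Finset.card_biUnion_le_card_mul Finset.univ B ℓ (fun p _ => hB1 p)
    rw [Finset.card_univ, Fintype.card_prod, Fintype.card_fin] at h2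
    have h3 : m ≤ m ^ 2 := by nlinarith
    calc W.card ≤ m + m * m * ℓ := by omega
      _ ≤ m ^ 2 + m * m * ℓ := by omega
      _ = (ℓ + 1) * m ^ 2 := by ring
  have hbd : 2 * k * W.card ≤ 2 * k * (ℓ + 1) * m ^ 2 := by
    rw [mul_assoc (2 * k)]
    exact Nat.mul_le_mul_left _ hWc
  let Cf : Fin m ⊕ (Fin m × Fin m) → Fin m ⊕ (Fin m × Fin m) → Prop := fun i j =>
    ∃ u ∈ C i, ∃ v ∈ C j, G.Adj u v
  let P1 : Finset (Fin m × Fin m × Fin m) := Finset.univ.filter (fun q => q.1 = q.2.1)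
  let P2 : Finset (Fin m × Fin m × Fin m) := Finset.univ.filter
    (fun q => Cf (Sum.inl q.1) (Sum.inr (q.2.1, q.2.2)))
  let P3 : Finset (Fin m × Fin m × Fin m) := Finset.univ.filter
    (fun q => ∃ d, Cf (Sum.inr (q.1, q.2.1)) (Sum.inr (q.2.2, d)))
  let P4 : Finset (Fin m × Fin m × Fin m) := Finset.univ.filter
    (fun q => ∃ d, Cf (Sum.inr (q.1, q.2.1)) (Sum.inr (d, q.2.2)))
  have hP1 : P1.card ≤ m ^ 2 := by
    have : P1.card ≤ (Finset.univ : Finset (Fin m × Fin m)).card := by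
      apply Finset.card_le_card_of_injOn (fun q => (q.1, q.2.2)) (by simp)
      rintro ⟨a, b, c⟩ hq ⟨a', b', c'⟩ hq' h
      simp only [P1, Finset.coe_filter, Finset.mem_univ, true_and, Set.mem_ofPred_eq] at hq hq'
      simp only [Prod.mk.injEq] at h
      simp [← hq, ← hq', h.1, h.2]
    refine this.trans (le_of_eq ?_)
    rw [Finset.card_univ, Fintype.card_prod, Fintype.card_fin, sq]
  have hP2 : P2.card ≤ 2 * k * (ℓ + 1) * m ^ 2 := by
    refine le_trans (conflict_count_inj hdeg C hC W hW P2
      (fun q => (Sum.inl q.1, Sum.inr (q.2.1, q.2.2))) ?_ ?_) hbd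
    · rintro ⟨a, b, c⟩ _ ⟨a', b', c'⟩ _ h
      simpa using h
    · intro q hq
      simpa only [P2, Finset.mem_filter, Finset.mem_univ, true_and] using hq
  have hP3 : P3.card ≤ 2 * k * (ℓ + 1) * m ^ 2 := by
    have hd : ∀ q : Fin m × Fin m × Fin m, ∃ d, q ∈ P3 →
        Cf (Sum.inr (q.1, q.2.1)) (Sum.inr (q.2.2, d)) := by
      intro q
      by_cases hq : q ∈ P3
      · have hq' := hq
        simp only [P3, Finset.mem_filter, Finset.mem_univ, true_and] at hq'
        obtain ⟨d, hd⟩ := hq'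
        exact ⟨d, fun _ => hd⟩
      · exact ⟨q.1, fun h => absurd h hq⟩
    choose d hd using hd
    refine le_trans (conflict_count_inj hdeg C hC W hW P3
      (fun q => (Sum.inr (q.1, q.2.1), Sum.inr (q.2.2, d q))) ?_ ?_) hbd
    · rintro ⟨a, b, c⟩ _ ⟨a', b', c'⟩ _ h
      simp only [Prod.mk.injEq, Sum.inr.injEq] at h
      simp [h.1.1, h.1.2, h.2.1]
    · intro q hq
      exact hd q hq
  have hP4 : P4.card ≤ 2 * k * (ℓ + 1) * m ^ 2 := by
    have hd : ∀ q : Fin m × Fin m × Fin m, ∃ d, q ∈ P4 →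
        Cf (Sum.inr (q.1, q.2.1)) (Sum.inr (d, q.2.2)) := by
      intro q
      by_cases hq : q ∈ P4
      · have hq' := hq
        simp only [P4, Finset.mem_filter, Finset.mem_univ, true_and] at hq'
        obtain ⟨d, hd⟩ := hq'
        exact ⟨d, fun _ => hd⟩
      · exact ⟨q.1, fun h => absurd h hq⟩
    choose d hd using hd
    refine le_trans (conflict_count_inj hdeg C hC W hW P4
      (fun q => (Sum.inr (q.1, q.2.1), Sum.inr (d q, q.2.2))) ?_ ?_) hbd
    · rintro ⟨a, b, c⟩ _ ⟨a', b', c'⟩ _ h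
      simp only [Prod.mk.injEq, Sum.inr.injEq] at h
      simp [h.1.1, h.1.2, h.2.2]
    · intro q hq
      exact hd q hq
  have hPc : (P1 ∪ P2 ∪ P3 ∪ P4).card ≤ (6 * k * (ℓ + 1) + 1) * m ^ 2 := by
    have h1 := Finset.card_union_le (P1 ∪ P2 ∪ P3) P4
    have h2 := Finset.card_union_le (P1 ∪ P2) P3
    have h3 := Finset.card_union_le P1 P2
    have h4 : (6 * k * (ℓ + 1) + 1) * m ^ 2 = 3 * (2 * k * (ℓ + 1) * m ^ 2) + m ^ 2 := by ring
    omega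
  obtain ⟨s, hs⟩ : ∃ s, s = ℓ + 3 := ⟨_, rfl⟩
  rw [← hs] at hm
  obtain ⟨f, hf⟩ := select s m _ (P1 ∪ P2 ∪ P3 ∪ P4) hPc hm
  let F : ℕ → Fin m := fun t => f ⟨t % s, Nat.mod_lt _ (by omega)⟩
  have hF : ∀ t1 < s, ∀ t2 < s, ∀ t3 < s, t1 ≠ t2 → t1 ≠ t3 → t2 ≠ t3 →
      (F t1, F t2, F t3) ∉ P1 ∪ P2 ∪ P3 ∪ P4 := by
    intro t1 h1 t2 h2 t3 h3 h12 h13 h23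
    apply hf
    · simpa [Fin.ext_iff, Nat.mod_eq_of_lt h1, Nat.mod_eq_of_lt h2] using h12
    · simpa [Fin.ext_iff, Nat.mod_eq_of_lt h1, Nat.mod_eq_of_lt h3] using h13
    · simpa [Fin.ext_iff, Nat.mod_eq_of_lt h2, Nat.mod_eq_of_lt h3] using h23
  simp only [P1, P2, P3, P4, Finset.mem_union, Finset.mem_filter, Finset.mem_univ, true_and,
    not_or, not_exists] at hF
  have hnx : ∀ t < s, (t + 1) % s < s ∧ (t + 1) % s ≠ t ∧
      ((t + 1) % s = t + 1 ∨ (t + 1 = s ∧ (t + 1) % s = 0)) := by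
    intro t ht
    by_cases h : t + 1 < s
    · rw [Nat.mod_eq_of_lt h]
      omega
    · have : t + 1 = s := by omega
      rw [this, Nat.mod_self]
      omega
  have hFinj : ∀ t < s, ∀ t' < s, F t = F t' → t = t' := by
    intro t ht t' ht' h
    by_contra hne
    have h3 : ∃ t'' < s, t ≠ t'' ∧ t' ≠ t'' := by
      by_cases h0 : t ≠ 0 ∧ t' ≠ 0
      · exact ⟨0, by omega, h0⟩
      by_cases h1 : t ≠ 1 ∧ t' ≠ 1
      · exact ⟨1, by omega, h1⟩
      · exact ⟨2, by omega, by omega, by omega⟩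
    obtain ⟨t'', ht'', h1, h2⟩ := h3
    exact (hF t ht t' ht' t'' ht'' hne h1 h2).1.1.1 h
  obtain ⟨m', hm', ⟨φ⟩⟩ := cycle_of_links (G := G) s (by omega) (fun t => x (F t))
    (fun t => B (F t, F ((t + 1) % s)))
    (fun t ht t' ht' h => hFinj t ht t' ht' (hx h))
    (fun t _ t' _ => hind _ (hxX _) _ (hxX _))
    (fun t _ t' _ => Finset.disjoint_right.1 (hB2 _) (hxX _))
    (fun t ht t' ht' hne => hB3 _ _ (fun h => hne (hFinj t ht t' ht' (congrArg Prod.fst h))))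
    (by
      intro t ht t' ht' hne u hu v hv hadj
      obtain ⟨a1, a2, a3⟩ := hnx t ht
      obtain ⟨b1, b2, b3⟩ := hnx t' ht'
      by_cases h : t' = (t + 1) % s
      · refine (hF t ht _ a1 _ b1 a2.symm ?_ ?_).2 (F t') ⟨u, hu, v, hv, hadj⟩
        · omega
        · rw [← h]; exact b2.symm
      · exact (hF t ht _ a1 t' ht' a2.symm hne (Ne.symm h)).1.2 (F ((t' + 1) % s))
          ⟨u, hu, v, hv, hadj⟩)
    (by
      intro t ht t' ht' hne hne2 u hu hadj
      obtain ⟨b1, b2, b3⟩ := hnx t' ht'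
      exact (hF t ht t' ht' _ b1 hne hne2 b2.symm).1.1.2
        ⟨x (F t), by simp [C], u, hu, hadj⟩)
    (by
      intro t ht
      obtain ⟨a1, a2, a3⟩ := hnx t ht
      exact hB4 _ _ (fun h => a2 (hFinj _ ht _ a1 h).symm))
  exact (hring m' (by omega) (by omega)).false φ

lemma depthOf_le (L : ℕ) (hL : 2 ≤ L) (j : ℕ) : depthOf L j ≤ L ^ (2 * j) := by
  induction j with
  | zero => simp [depthOf]
  | succ j ih =>
    have h1 : L * depthOf L j ≤ L * L ^ (2 * j) := Nat.mul_le_mul_left _ ih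
    have h2 : 0 < L * L ^ (2 * j) := by positivity
    have h3 : 2 * (L * L ^ (2 * j)) ≤ L * (L * L ^ (2 * j)) := Nat.mul_le_mul_right _ hL
    have h4 : L ^ (2 * (j + 1)) = L * (L * L ^ (2 * j)) := by ring
    simp only [depthOf]
    omega

lemma path_bound {V : Type} {G : SimpleGraph V} {k ℓ L m n : ℕ}
    (hdeg : Degenerate G k)
    (hring : ∀ m : ℕ, 3 ≤ m → ℓ ≤ m → IsEmpty (ringGraph m ↪g G))
    (HL : ∀ m, Nonempty (pathGraph m ↪g G) → m ≤ L)
    (hm : (ℓ + 3) ^ 3 * (6 * k * (ℓ + 1) + 1) < m) (M : ℕ)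
    (hM : (k + 1) * m + m * m * (2 * k * L + 2) * L < M)
    (hpath : HasPathOfOrder G n) :
    n < (M ^ (L * ((k + 1) * m) + 1)) ^ depthOf L ((k + 1) * m) := by
  by_contra hcon
  push Not at hcon
  obtain ⟨u, v, p, hp, hn⟩ := hpath
  have hM1 : 1 ≤ M := by omega
  have hR := rich_of_path (G := G) p.getVert n
    (fun i j hi hj h => hp.getVert_injOn (by simp; omega) (by simp; omega) h)
    (fun i hi => p.adj_getVert_succ (by omega))
    (M ^ (L * ((k + 1) * m) + 1)) (Nat.pow_pos hM1) (depthOf L ((k + 1) * m)) 0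
    (by simpa using hcon)
  obtain ⟨X, hX, Q, hQ⟩ := rich_rounds hM1 HL ((k + 1) * m) ∅ _ (by simp; omega)
    (hR.mono (fun T _ _ => by simp))
  have hins := insep_of_rich X Q hQ
  obtain ⟨Y, hYX, hYc, hYi⟩ := indep_exists hdeg m X (by rw [hX]; simp)
  have hmle : m ≤ (k + 1) * m := Nat.le_mul_of_pos_left _ (by omega)
  exact no_insep hdeg hring HL Y hYc hYi
    (fun x hx y hy => hins x (hYX hx) y (hYX hy)) (by omega) hm

lemma exponent_bound (k m L n : ℕ) (hL : 2 ≤ L) (hn : 1 ≤ n)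
    (h : n < (((k + 1) * m + m * m * (2 * k * L + 2) * L + 1) ^ (L * ((k + 1) * m) + 1)) ^
      depthOf L ((k + 1) * m)) :
    Real.logb 2 n ≤
      (L : ℝ) ^ ((k + 1) * m + m * m * (2 * k + 2) + 1 + 2 + (1 + ((k + 1) * m + 1)) +
        2 * ((k + 1) * m)) := by
  set m0 := (k + 1) * m with hm0
  set C := m0 + m * m * (2 * k + 2) + 1 with hC
  set M := m0 + m * m * (2 * k * L + 2) * L + 1 with hM
  have hpow : ∀ c : ℕ, c ≤ L ^ c := fun c =>
    (Nat.lt_two_pow_self).le.trans (Nat.pow_le_pow_left hL c)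
  have hL2 : 1 ≤ L ^ 2 := Nat.one_le_pow _ _ (by omega)
  have hMC : M ≤ C * L ^ 2 := by
    have h1 : m0 ≤ m0 * L ^ 2 := Nat.le_mul_of_pos_right _ hL2
    have h2 : m * m * (2 * k * L + 2) * L ≤ m * m * (2 * k + 2) * L ^ 2 := by
      have : (2 * k * L + 2) * L ≤ (2 * k + 2) * L ^ 2 := by nlinarith
      calc m * m * (2 * k * L + 2) * L = m * m * ((2 * k * L + 2) * L) := by ring
        _ ≤ m * m * ((2 * k + 2) * L ^ 2) := Nat.mul_le_mul_left _ this
        _ = _ := by ring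
    have h3 : C * L ^ 2 = m0 * L ^ 2 + m * m * (2 * k + 2) * L ^ 2 + L ^ 2 := by rw [hC]; ring
    omega
  have hM' : M ≤ L ^ (C + 2) :=
    hMC.trans (by rw [pow_add]; exact Nat.mul_le_mul_right _ (hpow C))
  have hR' : L * m0 + 1 ≤ L ^ (1 + (m0 + 1)) := by
    have h1 := hpow (m0 + 1)
    calc L * m0 + 1 ≤ L * (m0 + 1) := by rw [mul_add]; omega
      _ ≤ L * L ^ (m0 + 1) := Nat.mul_le_mul_left _ h1
      _ = _ := by ring
  have hD := depthOf_le L hL m0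
  have hexp : M * (L * m0 + 1) * depthOf L m0 ≤
      L ^ (C + 2 + (1 + (m0 + 1)) + 2 * m0) := by
    rw [pow_add _ _ (2 * m0), pow_add _ (C + 2)]
    exact Nat.mul_le_mul (Nat.mul_le_mul hM' hR') hD
  have hn2 : n ≤ 2 ^ (M * (L * m0 + 1) * depthOf L m0) := by
    refine h.le.trans ?_
    rw [pow_mul, pow_mul]
    exact Nat.pow_le_pow_left (Nat.pow_le_pow_left (Nat.lt_two_pow_self).le _) _
  have hlog : Real.logb 2 n ≤ ((M * (L * m0 + 1) * depthOf L m0 : ℕ) : ℝ) := by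
    rw [Real.logb_le_iff_le_rpow (by norm_num) (by exact_mod_cast hn), Real.rpow_natCast]
    exact_mod_cast hn2
  refine hlog.trans ?_
  exact_mod_cast hexp

end Helpers

theorem stmt4 (k ℓ : ℕ) (hk : 0 < k) (hℓ : 0 < ℓ) :
    ∃ d : ℝ, 0 < d ∧ d < 1 ∧
      ∀ {V : Type} [Fintype V] (G : SimpleGraph V) (n : ℕ),
        Degenerate G k →
        (∀ m : ℕ, 3 ≤ m → ℓ ≤ m → IsEmpty (ringGraph m ↪g G)) →
        HasPathOfOrder G n →
        HasInducedPathGE G (Real.logb 2 n ^ d) := by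
  classical
  obtain ⟨m, hm⟩ : ∃ m, (ℓ + 3) ^ 3 * (6 * k * (ℓ + 1) + 1) < m := ⟨_, Nat.lt_succ_self _⟩
  obtain ⟨E, hE⟩ : ∃ E, E = (k + 1) * m + m * m * (2 * k + 2) + 1 + 2 +
    (1 + ((k + 1) * m + 1)) + 2 * ((k + 1) * m) := ⟨_, rfl⟩
  have hE1 : 1 ≤ E := by omega
  have hE1' : (1 : ℝ) ≤ (E : ℝ) := by exact_mod_cast hE1
  refine ⟨1 / ((E : ℝ) + 1), by positivity, ?_, ?_⟩
  · rw [div_lt_one (by positivity)]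
    linarith
  intro V _ G n hdeg hring hpath
  let P : ℕ → Prop := fun m => Nonempty (pathGraph m ↪g G)
  have hP0 : P 0 := ⟨⟨⟨fun i => i.elim0, fun i => i.elim0⟩, fun {i} => i.elim0⟩⟩
  have hPle : ∀ m, P m → m ≤ Fintype.card V := by
    rintro m ⟨φ⟩
    simpa using Fintype.card_le_of_injective φ φ.injective
  obtain ⟨L, hL⟩ : ∃ L, L = Nat.findGreatest P (Fintype.card V) := ⟨_, rfl⟩
  have hPL : P L := hL ▸ Nat.findGreatest_spec (Nat.zero_le _) hP0
  have HL : ∀ m, Nonempty (pathGraph m ↪g G) → m ≤ L := fun m h =>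
    hL ▸ Nat.le_findGreatest (hPle m h) h
  refine ⟨L, ?_, hPL⟩
  have hn1 : 1 ≤ n := by
    obtain ⟨_, _, _, _, h⟩ := hpath
    omega
  by_cases hn : n = 1
  · subst hn
    rw [Nat.cast_one, Real.logb_one, Real.zero_rpow (by positivity)]
    positivity
  have hL2 : 2 ≤ L := by
    obtain ⟨u, v, p, hp, h⟩ := hpath
    have hadj := p.adj_getVert_succ (i := 0) (by omega)
    have hadj' : (restr G Set.univ).Adj (p.getVert 0) (p.getVert (0 + 1)) :=
      ⟨hadj, Set.mem_univ _, Set.mem_univ _⟩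
    have := dist_lt_of_noPath HL (Set.mem_univ _) hadj'.reachable
    rw [dist_eq_one_iff_adj.2 hadj'] at this
    exact this
  have hb := exponent_bound k m L n hL2 hn1
    (path_bound hdeg hring HL hm _ (Nat.lt_succ_self _) hpath)
  rw [← hE] at hb
  have hlog0 : 0 ≤ Real.logb 2 n :=
    Real.logb_nonneg (by norm_num) (by exact_mod_cast hn1)
  have hLr : (1 : ℝ) ≤ (L : ℝ) := by exact_mod_cast (by omega : 1 ≤ L)
  calc Real.logb 2 n ^ (1 / ((E : ℝ) + 1)) ≤ ((L : ℝ) ^ E) ^ (1 / ((E : ℝ) + 1)) :=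
        Real.rpow_le_rpow hlog0 hb (by positivity)
    _ = (L : ℝ) ^ ((E : ℝ) * (1 / ((E : ℝ) + 1))) := by
        rw [← Real.rpow_natCast, ← Real.rpow_mul (by positivity)]
    _ ≤ (L : ℝ) ^ (1 : ℝ) := by
        apply Real.rpow_le_rpow_of_exponent_le hLr
        rw [mul_one_div, div_le_one (by positivity)]
        linarith
    _ = L := Real.rpow_one _
end
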